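/- arXiv:2005.08058 — 2 statements merged into one kernel-verified Lean document; each statement's English description precedes it below -/
import Mathlib

section
/- Every cactus graph satisfies the substructure property. -/
open SimpleGraph

namespace EVC

variable {V : Type}

/-- `S` is a vertex cover of `G`. -/
def IsCover (G : SimpleGraph V) (S : Set V) : Prop :=
  ∀ ⦃u v : V⦄, G.Adj u v → u ∈ S ∨ v ∈ S

/-- A valid movement of guards from configuration `C` to configuration `C'`, witnessed by a
multiset `M` of (source, target) pairs (a bijection between the two multisets of guards):
every guard either stays in place or moves to an adjacent vertex. -/
def ValidMove (G : SimpleGraph V) (C C' : Multiset V) (M : Multiset (V × V)) : Prop :=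
  M.map Prod.fst = C ∧ M.map Prod.snd = C' ∧ ∀ p ∈ M, p.1 = p.2 ∨ G.Adj p.1 p.2

/-- A defense strategy on `G` with `k` guards: a nonempty family of vertex-cover
configurations of size `k` such that any attack on an edge can be defended by a valid
move staying within the family. -/
def IsDefense (G : SimpleGraph V) (k : ℕ) (F : Set (Multiset V)) : Prop :=
  F.Nonempty ∧
  (∀ C ∈ F, Multiset.card C = k ∧ IsCover G {v | v ∈ C}) ∧
  (∀ C ∈ F, ∀ u v : V, G.Adj u v →
    ∃ C' ∈ F, ∃ M : Multiset (V × V), ValidMove G C C' M ∧ ((u, v) ∈ M ∨ (v, u) ∈ M))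

/-- The eternal vertex cover number of `G`. -/
noncomputable def evc (G : SimpleGraph V) : ℕ :=
  sInf {k | ∃ F : Set (Multiset V), IsDefense G k F}

/-- `evc_S(G)`: the minimum number of guards of a defense strategy on `G` in which every
vertex of `S` is occupied in every configuration. -/
noncomputable def evcOn (G : SimpleGraph V) (S : Set V) : ℕ :=
  sInf {k | ∃ F : Set (Multiset V), IsDefense G k F ∧ ∀ C ∈ F, ∀ s ∈ S, s ∈ C}

/-- `C` is an eternal vertex cover configuration of `G`: it belongs to some defense strategy. -/
def IsEvcConfig (G : SimpleGraph V) (C : Multiset V) : Prop :=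
  ∃ (k : ℕ) (F : Set (Multiset V)), IsDefense G k F ∧ C ∈ F

open Classical in
/-- The number of guards of configuration `C` that lie in the set `S`. -/
noncomputable def guardsOn (C : Multiset V) (S : Set V) : ℕ :=
  Multiset.card (C.filter (fun v => v ∈ S))

/-- `G_x^+`: the graph `G` together with one new vertex (`none`) adjacent only to `x`. -/
def addPendant (G : SimpleGraph V) (x : V) : SimpleGraph (Option V) :=
  SimpleGraph.fromRel (fun a b =>
    (∃ u w : V, a = some u ∧ b = some w ∧ G.Adj u w) ∨ (a = none ∧ b = some x))

/-- The induced subgraph of `G` obtained by deleting the vertex `x`. -/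
abbrev delVert (G : SimpleGraph V) (x : V) : SimpleGraph {v : V | v ≠ x} :=
  G.induce {v : V | v ≠ x}

/-- `x` is a cut vertex of `G`: deleting `x` separates two vertices that were connected. -/
def IsCutVertex (G : SimpleGraph V) (x : V) : Prop :=
  ∃ (u v : V) (hu : u ≠ x) (hv : v ≠ x), G.Reachable u v ∧
    ¬ (delVert G x).Reachable ⟨u, hu⟩ ⟨v, hv⟩

/-- `G` is Type 1 with respect to `x`: `evc(G_x^+) = evc_x(G)`. -/
def Type1 (G : SimpleGraph V) (x : V) : Prop := evc (addPendant G x) = evcOn G {x}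

/-- `G` is Type 2 with respect to `x`: `evc(G_x^+) > evc_x(G)`. -/
def Type2 (G : SimpleGraph V) (x : V) : Prop := evcOn G {x} < evc (addPendant G x)

/-- The vertex set of the `x`-component of `G` corresponding to the connected component `H`
of `G − x`: the vertices of `H` together with `x`. -/
def xCompSet (G : SimpleGraph V) (x : V) (H : (delVert G x).ConnectedComponent) : Set V :=
  insert x (Subtype.val '' H.supp)

lemma x_mem_xCompSet (G : SimpleGraph V) (x : V) (H : (delVert G x).ConnectedComponent) :
    x ∈ xCompSet G x H := Set.mem_insert _ _

/-- `evc_x(G_i)` for the `x`-component `G_i` of `G` corresponding to `H`. -/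
noncomputable def evcComp (G : SimpleGraph V) (x : V)
    (H : (delVert G x).ConnectedComponent) : ℕ :=
  evcOn (G.induce (xCompSet G x H)) {(⟨x, x_mem_xCompSet G x H⟩ : ↥(xCompSet G x H))}

/-- The `x`-component of `G` corresponding to `H` is Type 1 with respect to `x`. -/
def CompType1 (G : SimpleGraph V) (x : V) (H : (delVert G x).ConnectedComponent) : Prop :=
  Type1 (G.induce (xCompSet G x H)) ⟨x, x_mem_xCompSet G x H⟩

/-- The `x`-component of `G` corresponding to `H` is Type 2 with respect to `x`. -/
def CompType2 (G : SimpleGraph V) (x : V) (H : (delVert G x).ConnectedComponent) : Prop :=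
  Type2 (G.induce (xCompSet G x H)) ⟨x, x_mem_xCompSet G x H⟩

/-- The substructure property: for every non-cut vertex `x` of `G` and every `x`-extension
`G'` of `G` (i.e. every connected graph `G'` having `G` as an `x`-component, via an
isomorphism `φ` identifying `x` with a cut vertex `x'` of `G'`), every eternal vertex cover
configuration of `G'` has at least `evc_x(G) − 1` guards on the copy of `V(G)` in case
`evc(G_x^+) ≤ evc_x(G)`, and at least `evc_x(G)` guards on it in case
`evc(G_x^+) > evc_x(G)`. -/
def SubstructureProperty (G : SimpleGraph V) : Prop :=
  ∀ x : V, ¬ IsCutVertex G x →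
  ∀ (V' : Type) [Finite V'], ∀ (G' : SimpleGraph V') (x' : V'),
    G'.Connected → IsCutVertex G' x' →
  ∀ (H : (delVert G' x').ConnectedComponent) (φ : G ≃g G'.induce (xCompSet G' x' H)),
    (φ x : ↥(xCompSet G' x' H)).1 = x' →
  ∀ C' : Multiset V', IsEvcConfig G' C' →
    (evc (addPendant G x) ≤ evcOn G {x} →
        evcOn G {x} - 1 ≤ guardsOn C' (xCompSet G' x' H)) ∧
    (evcOn G {x} < evc (addPendant G x) →
        evcOn G {x} ≤ guardsOn C' (xCompSet G' x' H))

/-- The `x`-component corresponding to `H` is edge-disjoint from (the induced subgraph on)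
the vertex set `S`. -/
def EdgeDisjointComp (G : SimpleGraph V) (S : Set V) (x : V)
    (H : (delVert G x).ConnectedComponent) : Prop :=
  ∀ u v : V, G.Adj u v → u ∈ S → v ∈ S →
    ¬(u ∈ xCompSet G x H ∧ v ∈ xCompSet G x H)

/-- The components attached to the vertex set `S` (of a block or a path): pairs `(x, H)`
with `x ∈ X ∩ S` a cut vertex on `S` and `H` a component of `G − x` whose `x`-component
is edge-disjoint from `S`. -/
def SComponents (G : SimpleGraph V) (X S : Set V) :
    Set (Σ x : V, (delVert G x).ConnectedComponent) :=
  {p | p.1 ∈ X ∧ p.1 ∈ S ∧ EdgeDisjointComp G S p.1 p.2}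

/-- `χ(G, S)` where `S` is the vertex set of a block or a path of `G` and `X` is the set
of cut vertices of `G`. -/
noncomputable def chi (G : SimpleGraph V) (X S : Set V) : ℕ :=
  Nat.card ↥(S ∩ X)
    + ∑ᶠ p ∈ {p ∈ SComponents G X S | CompType1 G p.1 p.2}, (evcComp G p.1 p.2 - 2)
    + ∑ᶠ p ∈ {p ∈ SComponents G X S | CompType2 G p.1 p.2}, (evcComp G p.1 p.2 - 1)

/-- The set `S` induces a block of `G`: a maximal (vertex set of a) connected induced
subgraph having no cut vertex. -/
def IsBlock (G : SimpleGraph V) (S : Set V) : Prop :=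
  (G.induce S).Connected ∧ (∀ y : ↥S, ¬ IsCutVertex (G.induce S) y) ∧
  ∀ T : Set V, S ⊆ T → (G.induce T).Connected →
    (∀ y : ↥T, ¬ IsCutVertex (G.induce T) y) → T ⊆ S

/-- The induced subgraph of `G` on `S` is a cycle: there is a chordless cycle of `G` whose
vertex set is exactly `S`. -/
def IsCycleSet (G : SimpleGraph V) (S : Set V) : Prop :=
  ∃ (a : V) (c : G.Walk a a), c.IsCycle ∧ S = {v | v ∈ c.support} ∧
    ∀ u v : V, u ∈ c.support → v ∈ c.support → G.Adj u v → s(u, v) ∈ c.edges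

/-- `G` is chordal: every cycle of length at least four has a chord. -/
def IsChordal (G : SimpleGraph V) : Prop :=
  ∀ (a : V) (c : G.Walk a a), c.IsCycle → 4 ≤ c.length →
    ∃ u v : V, u ∈ c.support ∧ v ∈ c.support ∧ G.Adj u v ∧ s(u, v) ∉ c.edges

/-- `G` is biconnected (2-connected): connected, at least three vertices, no cut vertex. -/
def IsBiconnected (G : SimpleGraph V) : Prop :=
  G.Connected ∧ 3 ≤ Nat.card V ∧ ∀ x : V, ¬ IsCutVertex G x

/-- `G` is a cactus: connected, and any two distinct simple cycles share at most one vertex. -/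
def IsCactus (G : SimpleGraph V) : Prop :=
  G.Connected ∧
  ∀ (a b : V) (c₁ : G.Walk a a) (c₂ : G.Walk b b), c₁.IsCycle → c₂.IsCycle →
    {e | e ∈ c₁.edges} ≠ {e | e ∈ c₂.edges} →
    {v | v ∈ c₁.support ∧ v ∈ c₂.support}.Subsingleton

/-- `mvc_S(G)`: minimum cardinality of a vertex cover of `G` containing all vertices of `S`. -/
noncomputable def mvcOn (G : SimpleGraph V) (S : Set V) : ℕ :=
  sInf {k | ∃ T : Set V, IsCover G T ∧ S ⊆ T ∧ Nat.card ↥T = k}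

/-- `P` is an induced path of `G`. -/
def IsInducedPath (G : SimpleGraph V) {a b : V} (P : G.Walk a b) : Prop :=
  P.IsPath ∧ ∀ u v : V, u ∈ P.support → v ∈ P.support → G.Adj u v → s(u, v) ∈ P.edges

/-- `P` is obtained by removing one edge from an induced cycle of `G`. -/
def IsInducedCycleMinusEdge (G : SimpleGraph V) {a b : V} (P : G.Walk a b) : Prop :=
  P.IsPath ∧ 2 ≤ P.length ∧ G.Adj a b ∧
    ∀ u v : V, u ∈ P.support → v ∈ P.support → G.Adj u v →
      (s(u, v) ∈ P.edges ∨ s(u, v) = s(a, b))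

open Classical in
/-- `P` is an eventful path of `G` (with `X` the set of cut vertices of `G`): it is an
induced path or an induced cycle minus an edge, its endpoints lie in `X`, and every
(contiguous) subpath of `P` with both endpoints in `X` has an even number of vertices
outside `X`. -/
def Eventful (G : SimpleGraph V) (X : Set V) {a b : V} (P : G.Walk a b) : Prop :=
  (IsInducedPath G P ∨ IsInducedCycleMinusEdge G P) ∧ a ∈ X ∧ b ∈ X ∧
    ∀ i j : Fin P.support.length, (i : ℕ) ≤ (j : ℕ) →
      P.support.get i ∈ X → P.support.get j ∈ X →
      Even (Multiset.countP (fun v => v ∉ X)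
        (((P.support.drop (i : ℕ)).take ((j : ℕ) - (i : ℕ) + 1) : List V) : Multiset V))

/-- The vertex bunch `VB_G(P)` of the path `P`: `V(P)` together with all vertices of the
`P`-components. -/
def vertexBunch (G : SimpleGraph V) (X : Set V) {a b : V} (P : G.Walk a b) : Set V :=
  {v | v ∈ P.support} ∪
    ⋃ p ∈ SComponents G X {v | v ∈ P.support}, xCompSet G p.1 p.2

/-!
For a cactus `G` with root `x` there is a number `a` such that, on the one hand, in every graph in
which `G` is attached to the rest through `x` alone every eternal vertex cover configuration has at
least `a` guards on `G - x`, and, on the other hand, `a + 2` guards can defend `G` while keeping `x`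
occupied and being able at any time to bring a second guard to `x`. The strategy gives
`evc_x(G) ≤ a + 2` and `evc(G_x^+) ≤ a + 2`. If `x` is unoccupied, an attack on an edge at `x` takes
a guard away from `G - x`, so `G` always carries at least `a + 1` guards, and the substructure
property follows.

Both halves go by induction along a cycle through `x`, or a bridge at `x` regarded as a cycle of
length two. It cuts `G` into branches; if these have the numbers `a_i`, and `m` branches away from
`x` are nontrivial and `t` are trivial, then `a = ∑ a_i + m + ⌊t / 2⌋`. For the lower bound, each
nontrivial branch away from `x` needs one guard more than `a_i`, and between two trivial ones there
must be a further guard. For the strategy, a state in which each edge of the cycle gives half a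
guard to one of its ends tells how many guards stand on the vertices of the cycle, and the branches
are defended independently with the guards that the cycle lends to their roots.
-/

section Counting

lemma guardsOn_zero (S : Set V) : guardsOn 0 S = 0 := by simp [guardsOn]

open scoped Classical in
lemma guardsOn_cons (v : V) (C : Multiset V) (S : Set V) :
    guardsOn (v ::ₘ C) S = (if v ∈ S then 1 else 0) + guardsOn C S := by
  rw [guardsOn, Multiset.filter_cons, Multiset.card_add, guardsOn]
  split_ifs <;> simp

lemma guardsOn_mono (C : Multiset V) {S T : Set V} (h : S ⊆ T) :
    guardsOn C S ≤ guardsOn C T := by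
  classical
  exact Multiset.card_le_card (Multiset.monotone_filter_right C fun _ hv => h hv)

lemma guardsOn_eq_zero {C : Multiset V} {S : Set V} (h : ∀ v ∈ C, v ∉ S) : guardsOn C S = 0 := by
  simpa [guardsOn, Multiset.filter_eq_nil] using h

lemma guardsOn_biUnion {κ : Type*} (s : Finset κ) (C : Multiset V) {A : κ → Set V}
    (hA : (s : Set κ).PairwiseDisjoint A) :
    guardsOn C (⋃ i ∈ s, A i) = ∑ i ∈ s, guardsOn C (A i) := by
  classical
  induction C using Multiset.induction_on with
  | empty => simp [guardsOn_zero]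
  | cons v C ih =>
    simp only [guardsOn_cons, Finset.sum_add_distrib, ih]
    congr 1
    by_cases hv : ∃ i ∈ s, v ∈ A i
    · obtain ⟨i, hi, hvi⟩ := hv
      rw [Finset.sum_eq_single_of_mem i hi, if_pos hvi, if_pos (Set.mem_iUnion₂.2 ⟨i, hi, hvi⟩)]
      intro j hj hji
      exact if_neg fun hvj => hji (hA.elim_set hj hi v hvj hvi)
    · push Not at hv
      rw [if_neg (by simpa using hv), Finset.sum_eq_zero fun i hi => if_neg (hv i hi)]

lemma guardsOn_union {S T : Set V} (C : Multiset V) (h : Disjoint S T) :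
    guardsOn C (S ∪ T) = guardsOn C S + guardsOn C T := by
  classical
  simp only [guardsOn, ← Multiset.card_add, Multiset.filter_add_filter, Set.mem_union,
    Multiset.filter_eq_nil.2 fun v _ (hv : v ∈ S ∧ v ∈ T) => Set.disjoint_left.1 h hv.1 hv.2,
    add_zero]

lemma guardsOn_pos {C : Multiset V} {S : Set V} {v : V} (hv : v ∈ C) (hS : v ∈ S) :
    0 < guardsOn C S := by
  classical
  exact Multiset.card_pos_iff_exists_mem.2 ⟨v, Multiset.mem_filter.2 ⟨hv, hS⟩⟩

lemma card_filter_not_lt_le_two {κ : Type*} [LinearOrder κ] {N : Finset κ} {a : κ}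
    (h : ∀ i ∈ N, ∀ j ∈ N, i < j → i ≤ a) : (N.filter (¬ · < a)).card ≤ 2 := by
  have hle : ((N.filter (¬ · < a)).erase a).card ≤ 1 := by
    refine Finset.card_le_one.2 fun i hi j hj => ?_
    simp only [Finset.mem_erase, Finset.mem_filter, not_lt] at hi hj
    by_contra hij
    rcases lt_or_gt_of_ne hij with hlt | hlt
    · exact hi.1 (le_antisymm (h i hi.2.1 j hj.2.1 hlt) hi.2.2)
    · exact hj.1 (le_antisymm (h j hj.2.1 i hi.2.1 hlt) hj.2.2)
  exact (Nat.sub_le_iff_le_add.1 Finset.pred_card_le_card_erase).trans (Nat.succ_le_succ hle)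

/-- The largest index of positive weight is charged by at most two elements of `N`, and all other
elements of `N` lie below it. -/
lemma card_div_two_le_sum {κ : Type*} [LinearOrder κ] (d : κ → ℕ) (N T : Finset κ)
    (h : ∀ i ∈ N, ∀ j ∈ N, i < j → ∃ k ∈ T, i ≤ k ∧ k ≤ j ∧ 0 < d k) :
    N.card / 2 ≤ ∑ k ∈ T, d k := by
  classical
  induction T using Finset.induction_on_max generalizing N with
  | empty =>
    have hN : N.card ≤ 1 := Finset.card_le_one.2 fun i hi j hj => by
      by_contra hij
      rcases lt_or_gt_of_ne hij with hlt | hlt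
      · simpa using h i hi j hj hlt
      · simpa using h j hj i hi hlt
    simpa using hN
  | insert a T hT ih =>
    rw [Finset.sum_insert fun ha => (hT a ha).false]
    rcases Nat.eq_zero_or_pos (d a) with ha | ha
    · rw [ha, zero_add]
      refine ih N fun i hi j hj hij => ?_
      obtain ⟨k, hk, hik, hkj, hdk⟩ := h i hi j hj hij
      rcases Finset.mem_insert.1 hk with rfl | hk
      · omega
      · exact ⟨k, hk, hik, hkj, hdk⟩
    · have hlow := ih (N.filter (· < a)) fun i hi j hj hij => by
        simp only [Finset.mem_filter] at hi hj
        obtain ⟨k, hk, hik, hkj, hdk⟩ := h i hi.1 j hj.1 hij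
        rcases Finset.mem_insert.1 hk with rfl | hk
        · exact absurd hj.2 hkj.not_gt
        · exact ⟨k, hk, hik, hkj, hdk⟩
      have hhigh : (N.filter (¬ · < a)).card ≤ 2 := by
        refine card_filter_not_lt_le_two fun i hi j hj hij => ?_
        obtain ⟨k, hk, hik, -, -⟩ := h i hi j hj hij
        exact hik.trans ((Finset.mem_insert.1 hk).elim le_of_eq fun hk => (hT k hk).le)
      have := Finset.card_filter_add_card_filter_not (s := N) (· < a)
      omega

end Counting

namespace ValidMove

variable {W : Type} {G : SimpleGraph V} {C C' D D' : Multiset V} {M N : Multiset (V × V)}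

lemma refl (G : SimpleGraph V) (C : Multiset V) : ValidMove G C C (C.map fun v => (v, v)) := by
  refine ⟨by simp, by simp, fun p hp => .inl ?_⟩
  obtain ⟨v, -, rfl⟩ := Multiset.mem_map.1 hp
  rfl

lemma replicate {u v : V} (h : u = v ∨ G.Adj u v) (n : ℕ) :
    ValidMove G (.replicate n u) (.replicate n v) (.replicate n (u, v)) :=
  ⟨by simp, by simp, fun _ hp => Multiset.eq_of_mem_replicate hp ▸ h⟩

lemma add (hM : ValidMove G C C' M) (hN : ValidMove G D D' N) :
    ValidMove G (C + D) (C' + D') (M + N) :=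
  ⟨by rw [Multiset.map_add, hM.1, hN.1], by rw [Multiset.map_add, hM.2.1, hN.2.1],
    fun p hp => (Multiset.mem_add.1 hp).elim (hM.2.2 p) (hN.2.2 p)⟩

lemma map {H : SimpleGraph W} (f : G →g H) (h : ValidMove G C C' M) :
    ValidMove H (C.map f) (C'.map f) (M.map (Prod.map f f)) := by
  refine ⟨by simp [← h.1], by simp [← h.2.1], fun p hp => ?_⟩
  obtain ⟨q, hq, rfl⟩ := Multiset.mem_map.1 hp
  exact (h.2.2 q hq).imp (congrArg f) f.map_adj

end ValidMove

/-- A defense strategy with `k` guards that keeps the root `x` occupied, moves at most one of the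
guards standing on `x` in every defense, and can at any time bring a second guard to `x` without
moving those already there. The moves of such a strategy can be combined with moves of further
guards passing through `x`. -/
structure IsRootedDefense [DecidableEq V] (G : SimpleGraph V) (x : V) (k : ℕ)
    (𝓕 : Set (Multiset V)) : Prop where
  nonempty : 𝓕.Nonempty
  card_eq : ∀ C ∈ 𝓕, Multiset.card C = k
  isCover : ∀ C ∈ 𝓕, IsCover G {v | v ∈ C}
  root_mem : ∀ C ∈ 𝓕, x ∈ C
  exists_defend : ∀ C ∈ 𝓕, ∀ u v, G.Adj u v → ∃ C' ∈ 𝓕, ∃ M, ValidMove G C C' M ∧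
    ((u, v) ∈ M ∨ (v, u) ∈ M) ∧ C.count x ≤ M.count (x, x) + 1
  exists_reinforce : ∀ C ∈ 𝓕, ∃ C' ∈ 𝓕, ∃ M, ValidMove G C C' M ∧
    2 ≤ C'.count x ∧ C.count x ≤ M.count (x, x)

section Pendant

variable {G : SimpleGraph V} {x : V}

lemma addPendant_adj_some {u w : V} : (addPendant G x).Adj (some u) (some w) ↔ G.Adj u w := by
  simp only [addPendant, fromRel_adj, ne_eq, Option.some.injEq, reduceCtorEq, false_and, or_false]
  constructor
  · rintro ⟨-, ⟨_, _, rfl, rfl, h⟩ | ⟨_, _, rfl, rfl, h⟩⟩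
    exacts [h, h.symm]
  · exact fun h => ⟨h.ne, .inl ⟨u, w, rfl, rfl, h⟩⟩

lemma addPendant_adj_none {o : Option V} : (addPendant G x).Adj none o ↔ o = some x := by
  simp only [addPendant, fromRel_adj]
  constructor
  · rintro ⟨-, (⟨_, _, h, -⟩ | h) | ⟨_, _, -, h, -⟩ | h⟩ <;> simp_all
  · rintro rfl
    simp

/-- The configuration on `G_x^+` with the guards `D` on `G` and `q` guards on the new vertex. -/
def pendantConfig (D : Multiset V) (q : ℕ) : Multiset (Option V) :=
  D.map some + Multiset.replicate q none

/-- A guard on the new vertex counts as a guard on `x`: loops at `x` are replaced by moves along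
the new edge. -/
lemma ValidMove.pendant {D D' : Multiset V} {q q' : ℕ} {M : Multiset (V × V)}
    (h : ValidMove G (D + .replicate q x) (D' + .replicate q' x)
      (M + .replicate (q + q') (x, x))) :
    ValidMove (addPendant G x) (pendantConfig D q) (pendantConfig D' q')
      (M.map (Prod.map some some) +
        (.replicate q (none, some x) + .replicate q' (some x, none))) := by
  obtain ⟨h₁, h₂, h₃⟩ := h
  have hD : D = M.map Prod.fst + .replicate q' x := by
    refine add_right_cancel (b := .replicate q x) ?_
    rw [← h₁, Multiset.map_add, Multiset.map_replicate, add_assoc, ← Multiset.replicate_add,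
      add_comm q']
  have hD' : D' = M.map Prod.snd + .replicate q x := by
    refine add_right_cancel (b := .replicate q' x) ?_
    rw [← h₂, Multiset.map_add, Multiset.map_replicate, add_assoc, ← Multiset.replicate_add]
  refine ⟨?_, ?_, fun p hp => ?_⟩
  · simp [pendantConfig, hD, add_assoc, add_comm (Multiset.replicate q _)]
  · simp [pendantConfig, hD', add_assoc]
  · rcases Multiset.mem_add.1 hp with hp | hp
    · obtain ⟨e, he, rfl⟩ := Multiset.mem_map.1 hp
      exact (h₃ e (Multiset.mem_add.2 (.inl he))).imp (congrArg some) addPendant_adj_some.2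
    · rcases Multiset.mem_add.1 hp with hp | hp <;> obtain rfl := Multiset.eq_of_mem_replicate hp
      · exact .inr (addPendant_adj_none.2 rfl)
      · exact .inr (addPendant_adj_none.2 rfl).symm

/-- The configurations on `G_x^+` obtained from those of `𝓕` by moving at most one guard from `x`
to the new vertex, with `x` kept occupied. -/
def pendantFamily (x : V) (𝓕 : Set (Multiset V)) : Set (Multiset (Option V)) :=
  {P | ∃ D q, x ∈ D ∧ q ≤ 1 ∧ D + .replicate q x ∈ 𝓕 ∧ P = pendantConfig D q}

end Pendant

namespace IsRootedDefense

variable [DecidableEq V] {G : SimpleGraph V} {x : V} {k : ℕ} {𝓕 : Set (Multiset V)}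

lemma evcOn_le (h : IsRootedDefense G x k 𝓕) : evcOn G {x} ≤ k := by
  refine Nat.sInf_le ⟨𝓕, ⟨h.nonempty, fun C hC => ⟨h.card_eq C hC, h.isCover C hC⟩, ?_⟩, ?_⟩
  · intro C hC u v huv
    obtain ⟨C', hC', M, hM, hmem, -⟩ := h.exists_defend C hC u v huv
    exact ⟨C', hC', M, hM, hmem⟩
  · rintro C hC _ rfl
    exact h.root_mem C hC

lemma exists_defend_some (h : IsRootedDefense G x k 𝓕) {D : Multiset V} {q : ℕ} (hx : x ∈ D)
    (hD : D + .replicate q x ∈ 𝓕) {u v : V} (huv : G.Adj u v) :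
    ∃ P ∈ pendantFamily x 𝓕, ∃ M, ValidMove (addPendant G x) (pendantConfig D q) P M ∧
      ((some u, some v) ∈ M ∨ (some v, some u) ∈ M) := by
  obtain ⟨C', hC', M, hM, hmem, hcount⟩ := h.exists_defend _ hD u v huv
  have hq : q ≤ M.count (x, x) := by
    have := Multiset.count_pos.2 hx
    simp only [Multiset.count_add, Multiset.count_replicate_self] at hcount
    omega
  obtain ⟨M, rfl⟩ := Multiset.le_iff_exists_add.1 (Multiset.le_count_iff_replicate_le.1 hq)
  refine ⟨_, ⟨C', 0, h.root_mem C' hC', Nat.zero_le _, by simpa using hC', rfl⟩, _,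
    ValidMove.pendant (D' := C') (q' := 0) (M := M) (by simpa [add_comm] using hM), ?_⟩
  have hne : ∀ {a b : V}, G.Adj a b → (a, b) ∈ Multiset.replicate q (x, x) + M →
      (some a, some b) ∈ M.map (Prod.map some some) := by
    intro a b hab hM
    refine Multiset.mem_map.2
      ⟨(a, b), (Multiset.mem_add.1 hM).resolve_left fun hr => hab.ne ?_, rfl⟩
    have hab' := Prod.ext_iff.1 (Multiset.eq_of_mem_replicate hr)
    exact hab'.1.trans hab'.2.symm
  exact hmem.imp (fun hm => Multiset.mem_add.2 (.inl (hne huv hm)))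
    fun hm => Multiset.mem_add.2 (.inl (hne huv.symm hm))

lemma exists_defend_none (h : IsRootedDefense G x k 𝓕) {D : Multiset V} {q : ℕ} (hx : x ∈ D)
    (hq : q ≤ 1) (hD : D + .replicate q x ∈ 𝓕) :
    ∃ P ∈ pendantFamily x 𝓕, ∃ M, ValidMove (addPendant G x) (pendantConfig D q) P M ∧
      ((none, some x) ∈ M ∨ (some x, none) ∈ M) := by
  interval_cases q
  · obtain ⟨C', hC', M, hM, htwo, hcount⟩ := h.exists_reinforce _ hD
    have hM1 : 1 ≤ M.count (x, x) := by
      have := Multiset.count_pos.2 hx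
      simp only [Multiset.replicate_zero, add_zero] at hcount
      omega
    obtain ⟨M, rfl⟩ := Multiset.le_iff_exists_add.1 (Multiset.le_count_iff_replicate_le.1 hM1)
    obtain ⟨D', rfl⟩ := Multiset.le_iff_exists_add.1
      (Multiset.le_count_iff_replicate_le.1 (one_le_two.trans htwo))
    refine ⟨_, ⟨D', 1, ?_, le_rfl, add_comm _ D' ▸ hC', rfl⟩, _,
      ValidMove.pendant (D' := D') (q' := 1) (M := M) ?_, by simp⟩
    · simp only [Multiset.count_add, Multiset.count_replicate_self] at htwo
      exact Multiset.count_pos.1 (by omega)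
    · rwa [add_comm D', add_comm M]
  · refine ⟨_, ⟨_, 0, h.root_mem _ hD, Nat.zero_le _, by simpa using hD, rfl⟩, _,
      ValidMove.pendant (D' := D + .replicate 1 x) (q' := 0) (M := D.map fun v => (v, v)) ?_,
      by simp⟩
    simpa using ValidMove.refl G (D + .replicate 1 x)

lemma evc_addPendant_le (h : IsRootedDefense G x k 𝓕) : evc (addPendant G x) ≤ k := by
  refine Nat.sInf_le ⟨pendantFamily x 𝓕, ?_, ?_, ?_⟩
  · obtain ⟨C, hC⟩ := h.nonempty
    exact ⟨_, C, 0, h.root_mem C hC, Nat.zero_le _, by simpa using hC, rfl⟩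
  · rintro _ ⟨D, q, hx, -, hD, rfl⟩
    refine ⟨by simpa [pendantConfig] using h.card_eq _ hD, ?_⟩
    have hmem : ∀ v ∈ D + .replicate q x, some v ∈ pendantConfig D q := by
      intro v hv
      have hv : v ∈ D := (Multiset.mem_add.1 hv).elim id fun hv =>
        Multiset.eq_of_mem_replicate hv ▸ hx
      exact Multiset.mem_add.2 (.inl (Multiset.mem_map_of_mem _ hv))
    rintro (_ | u) (_ | v) huv
    · exact (huv.ne rfl).elim
    · exact .inr (addPendant_adj_none.1 huv ▸ hmem x (Multiset.mem_add.2 (.inl hx)))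
    · exact .inl (addPendant_adj_none.1 huv.symm ▸ hmem x (Multiset.mem_add.2 (.inl hx)))
    · exact (h.isCover _ hD (addPendant_adj_some.1 huv)).imp (hmem u) (hmem v)
  · rintro _ ⟨D, q, hx, hq, hD, rfl⟩ (_ | u) (_ | v) huv
    · exact (huv.ne rfl).elim
    · rw [addPendant_adj_none.1 huv]
      exact h.exists_defend_none hx hq hD
    · rw [addPendant_adj_none.1 huv.symm]
      simpa only [or_comm] using h.exists_defend_none hx hq hD
    · exact h.exists_defend_some hx hD (addPendant_adj_some.1 huv)

end IsRootedDefense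

section Ring

variable {n : ℕ} {R : Finset (Fin (n + 1))} {q : Fin (n + 1) → ℕ}

/-- The numbers `q i` of guards on a ring of `n + 1` vertices arising from half guards: each vertex
of `R` holds one half, each ring edge gives one half to one of its ends (`g i` tells whether the
edge from `i` to `i + 1` gives it to `i + 1`), and one or two halves, whichever makes the total
even, are given to a home vertex `h ∈ R`. -/
def IsRingState (R : Finset (Fin (n + 1))) (q : Fin (n + 1) → ℕ) : Prop :=
  ∃ h ∈ R, ∃ g : Fin (n + 1) → Bool, ∀ i, 2 * q i = (g (i - 1)).toNat + (!g i).toNat +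
    (if i ∈ R then 1 else 0) + (if i = h then 2 - Rᶜ.card % 2 else 0)

/-- A move of guards along a ring, from `q i` to `q' i` guards on the vertex `i`, where `r i` guards
move from `i` to `i + 1`, `l i` guards move from `i + 1` to `i`, and at most one guard leaves each
vertex. -/
structure IsRingMove (q q' r l : Fin (n + 1) → ℕ) : Prop where
  balance : ∀ i, q' i + (r i + l (i - 1)) = q i + (r (i - 1) + l i)
  out_le : ∀ i, r i + l (i - 1) ≤ q i
  out_le_one : ∀ i, r i + l (i - 1) ≤ 1

lemma IsRingMove.refl (q : Fin (n + 1) → ℕ) : IsRingMove q q 0 0 :=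
  ⟨by simp, by simp, by simp⟩

lemma zero_sub_one_eq_last : (0 : Fin (n + 1)) - 1 = Fin.last n :=
  sub_eq_of_eq_add (Fin.last_add_one n).symm

lemma succ_sub_one_eq_castSucc (j : Fin n) : j.succ - 1 = j.castSucc :=
  sub_eq_of_eq_add Fin.coeSucc_eq_succ.symm

lemma sum_comp_sub_one {A : Type*} [AddCommMonoid A] (f : Fin (n + 1) → A) :
    ∑ i, f (i - 1) = ∑ i, f i :=
  (Equiv.subRight (1 : Fin (n + 1))).sum_comp f

lemma exists_arc_indicator (h j : Fin (n + 1)) : ∃ χ : Fin (n + 1) → ℤ, χ j = 0 ∧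
    (∀ i, χ i = 0 ∨ χ i = 1) ∧
      ∀ i, χ i - χ (i - 1) = (if i = h then 1 else 0) - (if i = j then 1 else 0) := by
  refine ⟨fun i => (if h ≤ i then 1 else 0) - (if j ≤ i then 1 else 0) + if j < h then 1 else 0,
    ?_, fun i => ?_, fun i => ?_⟩
  · dsimp only
    split_ifs <;> omega
  · dsimp only
    split_ifs <;> omega
  · rcases Fin.eq_zero_or_eq_succ i with rfl | ⟨k, rfl⟩
    · rw [zero_sub_one_eq_last]
      simp [Fin.le_last, eq_comm]
    · simp only [succ_sub_one_eq_castSucc, Fin.le_def, Fin.ext_iff, Fin.val_succ, Fin.val_castSucc]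
      split_ifs <;> omega

namespace IsRingState

lemma sum_eq (hq : IsRingState R q) : ∑ i, q i = R.card + Rᶜ.card / 2 + 1 := by
  obtain ⟨h, -, g, hg⟩ := hq
  have hedges : ∑ i, ((g (i - 1)).toNat + (!g i).toNat) = n + 1 := by
    have hone : ∀ i, (g i).toNat + (!g i).toNat = 1 := fun i => by cases g i <;> rfl
    rw [Finset.sum_add_distrib, sum_comp_sub_one fun i => (g i).toNat, ← Finset.sum_add_distrib]
    simp [hone]
  have hsum : 2 * ∑ i, q i = n + 1 + R.card + (2 - Rᶜ.card % 2) := by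
    rw [Finset.mul_sum, Finset.sum_congr rfl fun i _ => hg i, Finset.sum_add_distrib,
      Finset.sum_add_distrib, hedges]
    simp
  have hcard := R.card_add_card_compl
  rw [Fintype.card_fin] at hcard
  omega

lemma eq_one_or_two (hq : IsRingState R q) {i : Fin (n + 1)} (hi : i ∈ R) :
    q i = 1 ∨ q i = 2 := by
  obtain ⟨h, -, g, hg⟩ := hq
  have := hg i
  have := Bool.toNat_le (g (i - 1))
  have := Bool.toNat_le (!g i)
  rw [if_pos hi] at *
  split_ifs at * <;> omega

lemma pos_or_pos (hq : IsRingState R q) (i : Fin (n + 1)) : 0 < q i ∨ 0 < q (i + 1) := by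
  obtain ⟨h, -, g, hg⟩ := hq
  have hi := hg i
  have hsucc := hg (i + 1)
  rw [add_sub_cancel_right] at hsucc
  cases hgi : g i <;> simp only [hgi, Bool.toNat_true, Bool.not_false] at hi hsucc <;> omega

lemma exists_of_zero_mem (hR : 0 ∈ R) : ∃ q, IsRingState R q := by
  let g : Fin (n + 1) → Bool := fun i => decide (Odd (Rᶜ.filter (· ≤ i)).card)
  refine ⟨_, 0, hR, g, fun i => Nat.mul_div_cancel' (Nat.dvd_of_mod_eq_zero ?_)⟩
  have hg : ∀ i, (g i).toNat = (Rᶜ.filter (· ≤ i)).card % 2 := fun i => by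
    rcases Nat.mod_two_eq_zero_or_one (Rᶜ.filter (· ≤ i)).card with hi | hi <;>
      simp [g, Nat.odd_iff, hi]
  have hnot : (!g i).toNat + (g i).toNat = 1 := by cases g i <;> rfl
  rcases Fin.eq_zero_or_eq_succ i with rfl | ⟨j, rfl⟩
  · have hlast := hg (Fin.last n)
    have hzero := hg 0
    rw [Finset.filter_true_of_mem fun i _ => Fin.le_last i] at hlast
    rw [Finset.filter_false_of_mem fun i hi hle => by simp_all, Finset.card_empty] at hzero
    rw [zero_sub_one_eq_last, if_pos hR, if_pos rfl]
    omega
  · have hcard : (Rᶜ.filter (· ≤ j.succ)).card =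
        (Rᶜ.filter (· ≤ j.castSucc)).card + if j.succ ∈ R then 0 else 1 := by
      have hle : ∀ i, i ≤ j.succ ↔ i = j.succ ∨ i ≤ j.castSucc := fun i => by
        simp only [Fin.le_def, Fin.ext_iff, Fin.val_succ, Fin.val_castSucc]
        omega
      simp only [hle, Finset.filter_or, Finset.filter_eq', Finset.mem_compl]
      split_ifs
      · simp
      · rw [Finset.card_union_of_disjoint (by simp [Fin.le_def]), Finset.card_singleton, add_comm]
    have hj := hg j.castSucc
    have hsucc := hg j.succ
    rw [succ_sub_one_eq_castSucc, if_neg (Fin.succ_ne_zero j)]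
    split_ifs at hcard ⊢ <;> omega

/-- Half guards are shifted by flipping the edges with `σ i ≠ 0`, rounded up in the direction given
by the sign of `σ i`. -/
lemma exists_move {h h' : Fin (n + 1)} {g : Fin (n + 1) → Bool} (hh : h ∈ R)
    (hg : ∀ i, 2 * q i = (g (i - 1)).toNat + (!g i).toNat +
      (if i ∈ R then 1 else 0) + (if i = h then 2 - Rᶜ.card % 2 else 0))
    (hh' : h' ∈ R) (σ : Fin (n + 1) → ℤ) (hσ : ∀ i, σ i = -1 ∨ σ i = 0 ∨ σ i = 1)
    (hd : ∀ i, σ i - σ (i - 1) = (if i = h' then 2 - Rᶜ.card % 2 else 0 : ℕ) -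
      (if i = h then 2 - Rᶜ.card % 2 else 0 : ℕ)) :
    ∃ q', IsRingState R q' ∧ IsRingMove q q' (fun i => if σ i = -1 ∧ g i = false then 1 else 0)
      (fun i => if σ i = 1 ∧ g i = true then 1 else 0) := by
  set r : Fin (n + 1) → ℕ := fun i => if σ i = -1 ∧ g i = false then 1 else 0
  set l : Fin (n + 1) → ℕ := fun i => if σ i = 1 ∧ g i = true then 1 else 0
  let g' : Fin (n + 1) → Bool := fun i => if σ i = 0 then g i else !g i
  have hflow : ∀ i, 2 * (r i : ℤ) - 2 * l i = ((g' i).toNat - (g i).toNat) - σ i := fun i => by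
    rcases hσ i with hi | hi | hi <;> cases hgi : g i <;> simp [r, l, g', hi, hgi]
  have hr : ∀ i, r i = 0 ∨ r i = 1 ∧ σ i = -1 ∧ (!g i).toNat = 1 := fun i => by
    by_cases hi : σ i = -1 ∧ g i = false <;> simp [r, hi]
  have hl : ∀ i, l i = 0 ∨ l i = 1 ∧ σ i = 1 ∧ (g i).toNat = 1 := fun i => by
    by_cases hi : σ i = 1 ∧ g i = true <;> simp [l, hi]
  have hout : ∀ i, r i + l (i - 1) ≤ q i ∧ r i + l (i - 1) ≤ 1 := fun i => by
    have hgi := hg i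
    have hdi := hd i
    have := hr i
    have := hl (i - 1)
    split_ifs at hgi hdi <;> first | omega | exact absurd (‹i = h› ▸ hh) ‹_›
  refine ⟨fun i => q i + (r (i - 1) + l i) - (r i + l (i - 1)), ⟨h', hh', g', fun i => ?_⟩,
    fun i => ?_, fun i => (hout i).1, fun i => (hout i).2⟩
  · have hnot : ∀ b : Bool, ((!b).toNat : ℤ) = 1 - b.toNat := by simp
    have := hg i
    have := hd i
    have := hflow i
    have := hflow (i - 1)
    have := hnot (g i)
    have := hnot (g' i)
    have := (hout i).1
    dsimp only
    omega
  · have := (hout i).1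
    omega

lemma exists_flip (hq : IsRingState R q) (i : Fin (n + 1)) :
    ∃ q' r l, IsRingState R q' ∧ IsRingMove q q' r l ∧ (0 < r i ∨ 0 < l i) := by
  obtain ⟨h, hh, g, hg⟩ := hq
  cases hgi : g i
  · obtain ⟨q', hq', hmove⟩ := exists_move hh hg hh (fun _ => -1) (by simp) (by simp)
    exact ⟨q', _, _, hq', hmove, by simp [hgi]⟩
  · obtain ⟨q', hq', hmove⟩ := exists_move hh hg hh (fun _ => 1) (by simp) (by simp)
    exact ⟨q', _, _, hq', hmove, by simp [hgi]⟩

/-- The home vertex becomes `j`. If it carries two halves, one travels along each of the two arcs;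
if it carries one, that half takes the arc for which no guard leaves `j`. -/
lemma exists_transfer (hq : IsRingState R q) {j : Fin (n + 1)} (hj : j ∈ R) :
    ∃ q' r l, IsRingState R q' ∧ IsRingMove q q' r l ∧ q' j = 2 ∧ r j + l (j - 1) = 0 := by
  rcases hq.eq_one_or_two hj with hone | htwo
  swap
  · exact ⟨q, 0, 0, hq, .refl q, htwo, rfl⟩
  obtain ⟨h, hh, g, hg⟩ := hq
  obtain ⟨χ, hχj, hχ, hdχ⟩ := exists_arc_indicator h j
  have hgj := hg j
  have hdj := hdχ j
  rw [if_pos hj] at hgj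
  rw [hχj, if_pos rfl] at hdj
  rcases Nat.mod_two_eq_zero_or_one Rᶜ.card with he | he
  · have hjh : j ≠ h := fun hjh => by rw [if_pos hjh] at hgj; omega
    rw [if_neg hjh] at hgj hdj
    obtain ⟨q', hq', hmove⟩ := exists_move hh hg hj (fun i => 1 - 2 * χ i)
      (fun i => by rcases hχ i with hi | hi <;> simp [hi])
      (fun i => by have := hdχ i; rw [he]; split_ifs at this ⊢ <;> simp <;> omega)
    refine ⟨q', _, _, hq', hmove, ?_⟩
    have hχ' : χ (j - 1) = 1 := by omega
    have hbal := hmove.balance j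
    cases hgj₁ : g j <;> cases hgj₂ : g (j - 1) <;> simp_all
  · obtain ⟨q', hq', hmove⟩ := exists_move hh hg hj (fun i => (g j).toNat - χ i)
      (fun i => by rcases hχ i with hi | hi <;> cases g j <;> simp [hi])
      (fun i => by have := hdχ i; rw [he]; split_ifs at this ⊢ <;> simp <;> omega)
    refine ⟨q', _, _, hq', hmove, ?_⟩
    have hbal := hmove.balance j
    have hχ' : χ (j - 1) = if j = h then 0 else 1 := by split_ifs at hdj ⊢ <;> omega
    cases hgj₁ : g j <;> cases hgj₂ : g (j - 1) <;> split_ifs at hgj hχ' <;> simp_all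

end IsRingState

end Ring

section Decomposition

variable {G : SimpleGraph V} {n : ℕ} {c : Fin (n + 1) → V}

/-- The graph `G` without the edges joining consecutive vertices of the ring `c`. -/
def offRing (G : SimpleGraph V) (c : Fin (n + 1) → V) : SimpleGraph V :=
  G.deleteEdges (Set.range fun i => s(c i, c (i + 1)))

/-- `c` lists, in cyclic order, the vertices of a cycle of `G`, or (for `n = 1`) the two ends of an
edge of `G`, such that deleting the edges between consecutive ones disconnects any two of them. In
a cactus every cycle and every bridge is of this kind. -/
structure IsRing (G : SimpleGraph V) (c : Fin (n + 1) → V) : Prop where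
  adj : ∀ i, G.Adj (c i) (c (i + 1))
  eq_of_reachable : ∀ i j, (offRing G c).Reachable (c i) (c j) → i = j

/-- The part of `G` hanging off the vertex `c i` of the ring `c`, including `c i` itself. -/
def branch (G : SimpleGraph V) (c : Fin (n + 1) → V) (i : Fin (n + 1)) : Set V :=
  {v | (offRing G c).Reachable (c i) v}

lemma root_mem_branch (G : SimpleGraph V) (c : Fin (n + 1) → V) (i : Fin (n + 1)) :
    c i ∈ branch G c i :=
  Reachable.refl _

/-- The ring vertex `c i` as a vertex of its branch. -/
def branchRoot (G : SimpleGraph V) (c : Fin (n + 1) → V) (i : Fin (n + 1)) : branch G c i :=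
  ⟨c i, root_mem_branch G c i⟩

lemma connected_induce_branch (i : Fin (n + 1)) : (G.induce (branch G c i)).Connected := by
  have hsupp : ((offRing G c).connectedComponentMk (c i)).supp = branch G c i := by
    ext v
    simp [branch, ConnectedComponent.mem_supp_iff, reachable_comm]
  rw [← hsupp]
  exact (ConnectedComponent.connected_toSimpleGraph _).mono fun u v huv =>
    deleteEdges_le (G := G) _ huv

lemma IsRing.injective (hc : IsRing G c) : Function.Injective c :=
  fun i j hij => hc.eq_of_reachable i j (hij ▸ Reachable.refl _)

lemma IsRing.add_one_ne (hc : IsRing G c) (i : Fin (n + 1)) : i + 1 ≠ i :=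
  fun h => (hc.adj i).ne (congrArg c h.symm)

lemma IsRing.disjoint_branch (hc : IsRing G c) {i j : Fin (n + 1)} (hij : i ≠ j) :
    Disjoint (branch G c i) (branch G c j) :=
  Set.disjoint_left.2 fun _ hi hj => hij (hc.eq_of_reachable i j (hi.trans hj.symm))

lemma IsRing.eq_of_mem (hc : IsRing G c) {i j : Fin (n + 1)} {v : V} (hi : v ∈ branch G c i)
    (hj : v ∈ branch G c j) : i = j :=
  hc.eq_of_reachable i j (hi.trans hj.symm)

lemma exists_mem_branch (hG : G.Connected) (c : Fin (n + 1) → V) (v : V) :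
    ∃ i, v ∈ branch G c i := by
  have mem_of_walk : ∀ {u w : V}, G.Walk u w → (∃ i, w ∈ branch G c i) → ∃ i, u ∈ branch G c i := by
    intro u w p hw
    induction p with
    | nil => exact hw
    | @cons u u' _ huu' _ ih =>
      obtain ⟨i, hi⟩ := ih hw
      by_cases hmem : s(u, u') ∈ Set.range fun i => s(c i, c (i + 1))
      · obtain ⟨j, hj⟩ := hmem
        rcases Sym2.eq_iff.1 hj with ⟨rfl, -⟩ | ⟨-, rfl⟩
        exacts [⟨j, root_mem_branch G c j⟩, ⟨j + 1, root_mem_branch G c (j + 1)⟩]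
      · exact ⟨i, hi.trans (deleteEdges_adj.2 ⟨huu', hmem⟩).symm.reachable⟩
  obtain ⟨p⟩ := hG.preconnected v (c 0)
  exact mem_of_walk p ⟨0, root_mem_branch G c 0⟩

lemma mem_branch_or_eq_of_adj (hG : G.Connected) (c : Fin (n + 1) → V) {u v : V}
    (huv : G.Adj u v) : (∃ i, u ∈ branch G c i ∧ v ∈ branch G c i) ∨
      ∃ i, u = c i ∧ v = c (i + 1) ∨ u = c (i + 1) ∧ v = c i := by
  by_cases hmem : s(u, v) ∈ Set.range fun i => s(c i, c (i + 1))
  · obtain ⟨i, hi⟩ := hmem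
    refine .inr ⟨i, (Sym2.eq_iff.1 hi).imp ?_ ?_⟩
    · exact fun h => ⟨h.1.symm, h.2.symm⟩
    · exact fun h => ⟨h.2.symm, h.1.symm⟩
  · obtain ⟨i, hi⟩ := exists_mem_branch hG c u
    exact .inl ⟨i, hi, hi.trans (deleteEdges_adj.2 ⟨huv, hmem⟩).reachable⟩

lemma IsRing.card_branch_lt [Finite V] (hc : IsRing G c) (i : Fin (n + 1)) :
    Nat.card (branch G c i) < Nat.card V := by
  refine Finite.card_subtype_lt (x := c (i + 1)) fun h => hc.add_one_ne i ?_
  exact hc.eq_of_mem (root_mem_branch G c (i + 1)) h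

lemma IsCactus.induce (hG : IsCactus G) {S : Set V} (hS : (G.induce S).Connected) :
    IsCactus (G.induce S) := by
  refine ⟨hS, fun a b c₁ c₂ h₁ h₂ hne u hu v hv => ?_⟩
  let f := (Embedding.induce (G := G) S).toHom
  have hf : Function.Injective f := Subtype.val_injective
  have hf' : Function.Injective (Sym2.map f) := Sym2.map.injective hf
  refine hf (hG.2 _ _ (c₁.map f) (c₂.map f) (h₁.map hf) (h₂.map hf) (fun h => hne ?_)
    ⟨?_, ?_⟩ ⟨?_, ?_⟩)
  · ext e
    simpa [Walk.edges_map, hf'.eq_iff] using Set.ext_iff.1 h (e.map f)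
  all_goals
    rw [Walk.support_map]
  exacts [List.mem_map_of_mem hu.1, List.mem_map_of_mem hu.2, List.mem_map_of_mem hv.1,
    List.mem_map_of_mem hv.2]

/-- The two arcs between `u` and `v`: without an edge `f` of the second arc, the first edge of the
first arc lies on a further cycle, which shares this edge, but not `f`, with the given one. -/
lemma IsCactus.not_reachable_of_isCycle_cons (hG : IsCactus G) {u b v : V} {h : G.Adj u b}
    {p : G.Walk b u} (hw : (Walk.cons h p).IsCycle) (hv : v ∈ p.support) (hvu : v ≠ u) :
    ¬ (G.deleteEdges {e | e ∈ (Walk.cons h p).edges}).Reachable u v := by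
  classical
  intro hr
  have hnodup : (s(u, b) :: ((p.takeUntil v hv).edges ++ (p.dropUntil v hv).edges)).Nodup := by
    rw [← Walk.edges_append, Walk.take_spec, ← Walk.edges_cons h p]
    exact hw.edges_nodup
  have hsub : ∀ e, e ∈ (p.takeUntil v hv).edges ∨ e ∈ (p.dropUntil v hv).edges → e ∈ p.edges :=
    fun e he => he.elim (p.edges_takeUntil_subset_edges hv ·) (p.edges_dropUntil_subset_edges hv ·)
  obtain ⟨f, hf⟩ : ∃ f, f ∈ (p.dropUntil v hv).edges :=
    List.exists_mem_of_ne_nil _ fun hnil => hvu (Walk.eq_of_length_eq_zero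
      (p := p.dropUntil v hv) (by rw [← Walk.length_edges, hnil, List.length_nil]))
  simp only [List.nodup_cons, List.nodup_append, List.mem_append, not_or] at hnodup
  obtain ⟨⟨he, he'⟩, -, -, hdisj⟩ := hnodup
  have hK : (G.deleteEdges {f}).Adj u b := deleteEdges_adj.2 ⟨h, fun hfe => he' (hfe ▸ hf)⟩
  have hreach : ((G.deleteEdges {f}).deleteEdges {s(u, b)}).Reachable u b := by
    rw [deleteEdges_deleteEdges]
    refine (hr.mono (deleteEdges_anti ?_)).trans
      ((p.takeUntil v hv).toDeleteEdges _ ?_).reachable.symm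
    · rintro e (rfl | rfl)
      · exact List.mem_cons_of_mem _ (hsub _ (.inr hf))
      · exact List.mem_cons_self
    · rintro e he₁ (rfl | rfl)
      exacts [hdisj _ he₁ _ hf rfl, he he₁]
  obtain ⟨a, d, hd, hed⟩ := adj_and_reachable_delete_edges_iff_exists_cycle.1 ⟨hK, hreach⟩
  have hle : G.deleteEdges {f} ≤ G := deleteEdges_le _
  refine h.ne (hG.2 _ _ _ (d.mapLe hle) hw (hd.mapLe hle) (fun heq => ?_) ⟨?_, ?_⟩ ⟨?_, ?_⟩)
  · have hfd : f ∈ d.edges := by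
      simpa using (Set.ext_iff.1 heq f).1 (List.mem_cons_of_mem _ (hsub f (.inr hf)))
    have := d.edges_subset_edgeSet hfd
    rw [edgeSet_deleteEdges] at this
    exact this.2 rfl
  · simp
  · simpa using d.fst_mem_support_of_mem_edges hed
  · simp
  · simpa using d.snd_mem_support_of_mem_edges hed

lemma IsCactus.not_reachable_deleteEdges (hG : IsCactus G) {a : V} {w : G.Walk a a}
    (hw : w.IsCycle) {u v : V} (hu : u ∈ w.support) (hv : v ∈ w.support) (huv : u ≠ v) :
    ¬ (G.deleteEdges {e | e ∈ w.edges}).Reachable u v := by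
  classical
  have hrot := hw.rotate hu
  have hedges : {e | e ∈ (w.rotate u hu).edges} = {e | e ∈ w.edges} :=
    Set.ext fun e => (w.rotate_edges u hu).mem_iff
  have hv' : v ∈ (w.rotate u hu).support := by simpa using hv
  rw [← hedges]
  cases hw' : w.rotate u hu with
  | nil => simp_all
  | cons h p =>
    rw [hw'] at hrot hv'
    exact hG.not_reachable_of_isCycle_cons hrot
      ((List.mem_cons.1 (Walk.support_cons h p ▸ hv')).resolve_left huv.symm) huv.symm

lemma IsCactus.exists_isRing_of_isCycle (hG : IsCactus G) {x : V} {w : G.Walk x x}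
    (hw : w.IsCycle) : ∃ (n : ℕ) (c : Fin (n + 1) → V), c 0 = x ∧ IsRing G c := by
  obtain ⟨n, hn⟩ := Nat.exists_eq_add_of_lt (zero_lt_three.trans_le hw.three_le_length)
  rw [zero_add] at hn
  have hsucc : ∀ i : Fin (n + 1), w.getVert ((i + 1 : Fin (n + 1)) : ℕ) = w.getVert (i + 1) := by
    intro i
    rw [Fin.val_add_one]
    split_ifs with h
    · simp [h, ← hn]
    · rfl
  have hrange : (Set.range fun i : Fin (n + 1) =>
      s(w.getVert i, w.getVert ((i + 1 : Fin (n + 1)) : ℕ))) = {e | e ∈ w.edges} := by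
    ext e
    induction e with | h a b => ?_
    simp only [Set.mem_ofPred_eq, Walk.mk_mem_edges_iff_exists, Set.mem_range, hsucc, hn,
      Fin.exists_iff, exists_prop]
  refine ⟨n, fun i => w.getVert i, w.getVert_zero, fun i => ?_, fun i j h => ?_⟩
  · simp only [hsucc]
    exact w.adj_getVert_succ (by omega)
  · by_contra hij
    rw [offRing, hrange] at h
    refine hG.not_reachable_deleteEdges hw (w.getVert_mem_support _) (w.getVert_mem_support _)
      (fun h => hij ?_) h
    exact Fin.ext (hw.getVert_injOn' (by simp; omega) (by simp; omega) h)

lemma isRing_of_not_reachable {x y : V} (hxy : G.Adj x y)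
    (hr : ¬ (G.deleteEdges {s(x, y)}).Reachable x y) : IsRing G ![x, y] := by
  have hrange : (Set.range fun i => s((![x, y] : Fin 2 → V) i, (![x, y] : Fin 2 → V) (i + 1))) =
      {s(x, y)} := by
    ext e
    simp [Fin.exists_fin_two, Sym2.eq_swap, eq_comm]
  refine ⟨Fin.forall_fin_two.2 ⟨hxy, hxy.symm⟩, fun i j h => ?_⟩
  rw [offRing, hrange] at h
  fin_cases i <;> fin_cases j
  exacts [rfl, (hr h).elim, (hr h.symm).elim, rfl]

lemma IsCactus.exists_isRing [Nontrivial V] (hG : IsCactus G) (x : V) :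
    ∃ (n : ℕ) (c : Fin (n + 1) → V), c 0 = x ∧ IsRing G c := by
  classical
  obtain ⟨y, hxy⟩ := hG.1.preconnected.exists_adj_of_nontrivial x
  by_cases hr : (G.deleteEdges {s(x, y)}).Reachable x y
  · obtain ⟨u, p, hp, hpe⟩ := adj_and_reachable_delete_edges_iff_exists_cycle.1 ⟨hxy, hr⟩
    exact hG.exists_isRing_of_isCycle (hp.rotate (p.fst_mem_support_of_mem_edges hpe))
  · exact ⟨1, ![x, y], rfl, isRing_of_not_reachable hxy hr⟩

end Decomposition

section Assembly

variable {G : SimpleGraph V} {n : ℕ} {c : Fin (n + 1) → V} {R : Finset (Fin (n + 1))}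
  {a q q' r l : Fin (n + 1) → ℕ}

/-- The guards that neither pass along the ring nor are exchanged move by `P`. -/
lemma validMove_sum_of_ring (hc : IsRing G c) {E E' : Fin (n + 1) → Multiset V}
    {P : Fin (n + 1) → Multiset (V × V)}
    (hfst : ∀ i, (P i).map Prod.fst + .replicate (r i + l (i - 1)) (c i) = E i)
    (hsnd : ∀ i, (P i).map Prod.snd + .replicate (r (i - 1) + l i) (c i) = E' i)
    (hP : ∀ i, ∀ p ∈ P i, p.1 = p.2 ∨ G.Adj p.1 p.2) :
    ValidMove G (∑ i, E i) (∑ i, E' i) (∑ i, (P i +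
      (.replicate (r i) (c i, c (i + 1)) + .replicate (l i) (c (i + 1), c i)))) := by
  have hfst_l := sum_comp_sub_one fun i => Multiset.replicate (l i) (c (i + 1))
  have hsnd_r := sum_comp_sub_one fun i => Multiset.replicate (r i) (c (i + 1))
  simp only [sub_add_cancel] at hfst_l hsnd_r
  refine ⟨?_, ?_, fun p hp => ?_⟩
  · simp only [← Multiset.coe_mapAddMonoidHom, map_sum, map_add]
    simp only [Multiset.coe_mapAddMonoidHom, Multiset.map_replicate, ← hfst,
      Multiset.replicate_add, Finset.sum_add_distrib, hfst_l]
  · simp only [← Multiset.coe_mapAddMonoidHom, map_sum, map_add]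
    simp only [Multiset.coe_mapAddMonoidHom, Multiset.map_replicate, ← hsnd,
      Multiset.replicate_add, Finset.sum_add_distrib, hsnd_r]
  · obtain ⟨i, -, hp⟩ := Multiset.mem_sum.1 hp
    rcases Multiset.mem_add.1 hp with hp | hp
    · exact hP i p hp
    · rcases Multiset.mem_add.1 hp with hp | hp <;> obtain rfl := Multiset.eq_of_mem_replicate hp
      exacts [.inr (hc.adj i), .inr (hc.adj i).symm]

variable [DecidableEq V]

/-- Rooted defenses `𝓕 i` of the branches of the ring `c` with `a i + 2` guards, where only the
branches with index in `R` may have more than one vertex. -/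
structure IsBranchDefense (G : SimpleGraph V) (c : Fin (n + 1) → V) (R : Finset (Fin (n + 1)))
    (a : Fin (n + 1) → ℕ) (𝓕 : ∀ i, Set (Multiset (branch G c i))) : Prop where
  isRootedDefense : ∀ i,
    IsRootedDefense (G.induce (branch G c i)) (branchRoot G c i) (a i + 2) (𝓕 i)
  subsingleton : ∀ i ∉ R, (branch G c i).Subsingleton

/-- The configuration `E i` on the branch of `c i` arises from the configuration `C i` of a branch
defense by exchanging two guards on `c i` for the `q i` guards that `c i` has in a ring state. -/
structure IsRingAssembly (R : Finset (Fin (n + 1))) (𝓕 : ∀ i, Set (Multiset (branch G c i)))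
    (q : Fin (n + 1) → ℕ) (C : ∀ i, Multiset (branch G c i)) (E : Fin (n + 1) → Multiset V) :
    Prop where
  isRingState : IsRingState R q
  mem : ∀ i, C i ∈ 𝓕 i
  two_le_count : ∀ i ∈ R, q i = 1 → 2 ≤ (C i).count (branchRoot G c i)
  eq : ∀ i, E i + .replicate 2 (c i) = (C i).map (↑) + .replicate (q i) (c i)

namespace IsRingAssembly

variable {𝓕 : ∀ i, Set (Multiset (branch G c i))} {C C' : ∀ i, Multiset (branch G c i)}
  {E E' : Fin (n + 1) → Multiset V}

lemma count_root (h : IsRingAssembly R 𝓕 q C E) (i : Fin (n + 1)) :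
    (E i).count (c i) + 2 = (C i).count (branchRoot G c i) + q i := by
  have hi := congrArg (Multiset.count (c i)) (h.eq i)
  rw [Multiset.count_add, Multiset.count_add, Multiset.count_replicate_self,
    Multiset.count_replicate_self] at hi
  rw [hi]
  exact congrArg (· + q i)
    (Multiset.count_map_eq_count' _ (C i) Subtype.val_injective (branchRoot G c i))

lemma mem_of_mem (h : IsRingAssembly R 𝓕 q C E) {i : Fin (n + 1)} {v : branch G c i}
    (hv : v ∈ C i) (hne : (v : V) ≠ c i) : (v : V) ∈ E i := by
  have hmem : (v : V) ∈ E i + .replicate 2 (c i) :=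
    h.eq i ▸ Multiset.mem_add.2 (.inl (Multiset.mem_map_of_mem _ hv))
  exact (Multiset.mem_add.1 hmem).resolve_right fun hr => hne (Multiset.eq_of_mem_replicate hr)

lemma mem_branch (h : IsRingAssembly R 𝓕 q C E) {i : Fin (n + 1)} {v : V} (hv : v ∈ E i) :
    v ∈ branch G c i := by
  have hmem : v ∈ (C i).map (↑) + .replicate (q i) (c i) :=
    h.eq i ▸ Multiset.mem_add.2 (.inl hv)
  rcases Multiset.mem_add.1 hmem with hv | hv
  · obtain ⟨w, -, rfl⟩ := Multiset.mem_map.1 hv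
    exact w.2
  · exact Multiset.eq_of_mem_replicate hv ▸ root_mem_branch G c i

lemma count_sum (hc : IsRing G c) (h : IsRingAssembly R 𝓕 q C E) (i : Fin (n + 1)) :
    (∑ j, E j).count (c i) = (E i).count (c i) := by
  rw [Multiset.count_sum']
  refine Finset.sum_eq_single_of_mem i (Finset.mem_univ i) fun j _ hji => ?_
  exact Multiset.count_eq_zero.2 fun hmem =>
    hji (hc.eq_of_mem (h.mem_branch hmem) (root_mem_branch G c i))

lemma exists_branch_move (h : IsRingAssembly R 𝓕 q C E) (h' : IsRingAssembly R 𝓕 q' C' E')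
    (hmove : IsRingMove q q' r l) {i : Fin (n + 1)} {N : Multiset (branch G c i × branch G c i)}
    (hN : ValidMove (G.induce (branch G c i)) (C i) (C' i) N)
    (hloops : 2 + (r i + l (i - 1)) ≤ N.count (branchRoot G c i, branchRoot G c i) + q i) :
    ∃ P : Multiset (V × V), P.map Prod.fst + .replicate (r i + l (i - 1)) (c i) = E i ∧
      P.map Prod.snd + .replicate (r (i - 1) + l i) (c i) = E' i ∧
      (∀ p ∈ P, p.1 = p.2 ∨ G.Adj p.1 p.2) ∧
      (∀ u v, (u, v) ∈ N → u ≠ v → ((u : V), (v : V)) ∈ P) ∧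
      N.count (branchRoot G c i, branchRoot G c i) + q i =
        P.count (c i, c i) + (2 + (r i + l (i - 1))) := by
  have hcount : (N.map (Prod.map (↑) (↑)) + .replicate (q i) (c i, c i)).count (c i, c i) =
      N.count (branchRoot G c i, branchRoot G c i) + q i := by
    rw [Multiset.count_add, Multiset.count_replicate_self]
    exact congrArg (· + q i) (Multiset.count_map_eq_count' _ N
      (Subtype.val_injective.prodMap Subtype.val_injective) (branchRoot G c i, branchRoot G c i))
  obtain ⟨P, hP⟩ := Multiset.le_iff_exists_add.1
    (Multiset.le_count_iff_replicate_le.1 (hcount ▸ hloops))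
  have hmove' : ValidMove G ((C i).map (↑) + .replicate (q i) (c i))
      ((C' i).map (↑) + .replicate (q i) (c i))
      (N.map (Prod.map (↑) (↑)) + .replicate (q i) (c i, c i)) :=
    (hN.map (Embedding.induce (branch G c i)).toHom).add (.replicate (.inl rfl) (q i))
  obtain ⟨hfst, hsnd, hadj⟩ := hP ▸ hmove'
  rw [Multiset.map_add, Multiset.map_replicate] at hfst hsnd
  refine ⟨P, add_right_cancel (b := .replicate 2 (c i)) ?_,
    add_right_cancel (b := .replicate (2 + (r i + l (i - 1))) (c i)) ?_,
    fun p hp => hadj p (Multiset.mem_add.2 (.inr hp)), fun u v huv hne => ?_, ?_⟩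
  · rw [h.eq i, add_assoc, ← Multiset.replicate_add, add_comm _ 2, add_comm]
    exact hfst
  · rw [add_right_comm, add_comm (P.map _), hsnd, add_assoc, ← Multiset.replicate_add,
      Multiset.replicate_add 2, ← add_assoc (E' i), h'.eq i, add_assoc (Multiset.map _ _),
      ← Multiset.replicate_add, hmove.balance]
  · have huv' := hP ▸ Multiset.mem_add.2 (.inl (Multiset.mem_map_of_mem _ huv))
    refine (Multiset.mem_add.1 huv').resolve_left fun hr => hne ?_
    have hr' := Prod.ext_iff.1 (Multiset.eq_of_mem_replicate hr)
    exact Subtype.ext (hr'.1.trans hr'.2.symm)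
  · rw [← hcount, add_comm (P.count _), ← Multiset.count_replicate_self (c i, c i) (2 + _),
      ← Multiset.count_add]
    exact congrArg _ hP

end IsRingAssembly

namespace IsBranchDefense

variable {𝓕 : ∀ i, Set (Multiset (branch G c i))} {C C' : ∀ i, Multiset (branch G c i)}
  {E E' : Fin (n + 1) → Multiset V}

lemma count_root_of_notMem (h𝓕 : IsBranchDefense G c R a 𝓕) {i : Fin (n + 1)} (hi : i ∉ R)
    {D : Multiset (branch G c i)} (hD : D ∈ 𝓕 i) : D.count (branchRoot G c i) = a i + 2 := by
  have := (h𝓕.subsingleton i hi).coe_sort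
  rw [Multiset.count_eq_card.2 fun v _ => Subsingleton.elim _ v]
  exact (h𝓕.isRootedDefense i).card_eq D hD

lemma two_le_count_add (h𝓕 : IsBranchDefense G c R a 𝓕) (hq : IsRingState R q) {i : Fin (n + 1)}
    {D : Multiset (branch G c i)} (hD : D ∈ 𝓕 i)
    (htwo : i ∈ R → q i = 1 → 2 ≤ D.count (branchRoot G c i)) :
    2 ≤ D.count (branchRoot G c i) + q i ∧
      (i ∈ R ∨ 0 < q i → 3 ≤ D.count (branchRoot G c i) + q i) := by
  by_cases hi : i ∈ R
  · have := Multiset.count_pos.2 ((h𝓕.isRootedDefense i).root_mem D hD)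
    rcases hq.eq_one_or_two hi with h | h
    · have := htwo hi h
      omega
    · omega
  · have := h𝓕.count_root_of_notMem hi hD
    simp only [hi, false_or]
    omega

lemma exists_isRingAssembly (h𝓕 : IsBranchDefense G c R a 𝓕) (hq : IsRingState R q)
    (hC : ∀ i, C i ∈ 𝓕 i)
    (htwo : ∀ i ∈ R, q i = 1 → 2 ≤ (C i).count (branchRoot G c i)) :
    ∃ E, IsRingAssembly R 𝓕 q C E := by
  have hle : ∀ i, Multiset.replicate 2 (c i) ≤ (C i).map (↑) + .replicate (q i) (c i) := by
    intro i
    rw [← Multiset.le_count_iff_replicate_le, Multiset.count_add, Multiset.count_replicate_self]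
    have hcount := Multiset.count_map_eq_count' _ (C i) Subtype.val_injective (branchRoot G c i)
    exact hcount ▸ (h𝓕.two_le_count_add hq (hC i) (htwo i)).1
  choose E hE using fun i => Multiset.le_iff_exists_add.1 (hle i)
  exact ⟨E, hq, hC, htwo, fun i => by rw [hE, add_comm]⟩

lemma two_add_le_add (h𝓕 : IsBranchDefense G c R a 𝓕) (h : IsRingAssembly R 𝓕 q C E)
    (hmove : IsRingMove q q' r l) {i : Fin (n + 1)} {m : ℕ}
    (hm : (C i).count (branchRoot G c i) ≤ m ∨
      i ∈ R ∧ r i + l (i - 1) = 0 ∧ (C i).count (branchRoot G c i) ≤ m + 1) :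
    2 + (r i + l (i - 1)) ≤ m + q i := by
  have hle := hmove.out_le i
  have hle_one := hmove.out_le_one i
  have hC := h𝓕.two_le_count_add h.isRingState (h.mem i) (h.two_le_count i)
  rcases hm with hm | ⟨hi, hout, hm⟩
  · by_cases hi : i ∈ R
    · have := hC.2 (.inl hi)
      omega
    · have := h𝓕.count_root_of_notMem hi (h.mem i)
      omega
  · have := hC.2 (.inl hi)
    omega

lemma exists_validMove_sum (h𝓕 : IsBranchDefense G c R a 𝓕) (hc : IsRing G c)
    (h : IsRingAssembly R 𝓕 q C E) (hq' : IsRingState R q') (hmove : IsRingMove q q' r l)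
    {N : ∀ i, Multiset (branch G c i × branch G c i)} (hC' : ∀ i, C' i ∈ 𝓕 i)
    (hN : ∀ i, ValidMove (G.induce (branch G c i)) (C i) (C' i) (N i))
    (hcase : ∀ i, 2 ≤ (C' i).count (branchRoot G c i) ∧
        (C i).count (branchRoot G c i) ≤ (N i).count (branchRoot G c i, branchRoot G c i) ∨
      i ∈ R ∧ q' i = 2 ∧ r i + l (i - 1) = 0 ∧ (C i).count (branchRoot G c i) ≤
        (N i).count (branchRoot G c i, branchRoot G c i) + 1) :
    ∃ E', IsRingAssembly R 𝓕 q' C' E' ∧ ∃ M, ValidMove G (∑ i, E i) (∑ i, E' i) M ∧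
      (∀ i u v, (u, v) ∈ N i → u ≠ v → ((u : V), (v : V)) ∈ M) ∧
      (∀ i, 0 < r i → (c i, c (i + 1)) ∈ M) ∧ (∀ i, 0 < l i → (c (i + 1), c i) ∈ M) ∧
      ∀ i, (∑ j, E j).count (c i) + (N i).count (branchRoot G c i, branchRoot G c i) ≤
        M.count (c i, c i) + (C i).count (branchRoot G c i) + (r i + l (i - 1)) := by
  have htwo : ∀ i ∈ R, q' i = 1 → 2 ≤ (C' i).count (branchRoot G c i) := fun i _ hi =>
    (hcase i).elim (·.1) fun hd => by omega
  have hloops := fun i => h𝓕.two_add_le_add h hmove (i := i)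
    ((hcase i).imp (·.2) fun hd => ⟨hd.1, hd.2.2⟩)
  obtain ⟨E', h'⟩ := h𝓕.exists_isRingAssembly hq' hC' htwo
  choose P hfst hsnd hP hmem hcount using fun i => h.exists_branch_move h' hmove (hN i) (hloops i)
  have hPM : ∀ i, P i + (.replicate (r i) (c i, c (i + 1)) + .replicate (l i) (c (i + 1), c i)) ≤
      ∑ j, (P j + (.replicate (r j) (c j, c (j + 1)) + .replicate (l j) (c (j + 1), c j))) :=
    fun i => Finset.single_le_sum (f := fun j => P j + (.replicate (r j) (c j, c (j + 1)) +
      .replicate (l j) (c (j + 1), c j))) (fun _ _ => Multiset.zero_le _) (Finset.mem_univ i)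
  refine ⟨E', h', _, validMove_sum_of_ring hc hfst hsnd hP, fun i u v huv hne => ?_,
    fun i hi => ?_, fun i hi => ?_, fun i => ?_⟩
  · exact Multiset.mem_of_le (hPM i) (Multiset.mem_add.2 (.inl (hmem i u v huv hne)))
  · refine Multiset.mem_of_le (hPM i) (Multiset.mem_add.2 (.inr (Multiset.mem_add.2 (.inl ?_))))
    exact Multiset.mem_replicate.2 ⟨hi.ne', rfl⟩
  · refine Multiset.mem_of_le (hPM i) (Multiset.mem_add.2 (.inr (Multiset.mem_add.2 (.inr ?_))))
    exact Multiset.mem_replicate.2 ⟨hi.ne', rfl⟩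
  · have hle := Multiset.count_le_of_le (c i, c i) (hPM i)
    rw [Multiset.count_add] at hle
    have := hcount i
    have := h.count_root i
    have := h.count_sum hc i
    omega

lemma exists_reinforcing_move (h𝓕 : IsBranchDefense G c R a 𝓕) (hc : IsRing G c)
    (h : IsRingAssembly R 𝓕 q C E) (hq' : IsRingState R q') (hmove : IsRingMove q q' r l) :
    ∃ C' E', IsRingAssembly R 𝓕 q' C' E' ∧ (∀ i, 2 ≤ (C' i).count (branchRoot G c i)) ∧
      ∃ M, ValidMove G (∑ i, E i) (∑ i, E' i) M ∧
      (∀ i, 0 < r i → (c i, c (i + 1)) ∈ M) ∧ (∀ i, 0 < l i → (c (i + 1), c i) ∈ M) ∧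
      ∀ i, (∑ j, E j).count (c i) ≤ M.count (c i, c i) + (r i + l (i - 1)) := by
  choose C' hC' N hN htwo hcount using fun i =>
    (h𝓕.isRootedDefense i).exists_reinforce (C i) (h.mem i)
  obtain ⟨E', h', M, hM, -, hr, hl, hroot⟩ := h𝓕.exists_validMove_sum hc h hq' hmove hC' hN
    fun i => .inl ⟨htwo i, hcount i⟩
  refine ⟨C', E', h', htwo, M, hM, hr, hl, fun i => ?_⟩
  have := hroot i
  have := hcount i
  omega

/-- The configurations of `G` assembled from branch defenses and a ring state. -/
def assembledFamily (R : Finset (Fin (n + 1))) (𝓕 : ∀ i, Set (Multiset (branch G c i))) :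
    Set (Multiset V) :=
  {D | ∃ q C E, IsRingAssembly R 𝓕 q C E ∧ D = ∑ i, E i}

lemma assembledFamily_nonempty (h𝓕 : IsBranchDefense G c R a 𝓕) (hR : 0 ∈ R) :
    (assembledFamily R 𝓕).Nonempty := by
  have hC : ∀ i, ∃ C ∈ 𝓕 i, 2 ≤ C.count (branchRoot G c i) := by
    intro i
    obtain ⟨C, hC⟩ := (h𝓕.isRootedDefense i).nonempty
    obtain ⟨C', hC', -, -, htwo, -⟩ := (h𝓕.isRootedDefense i).exists_reinforce C hC
    exact ⟨C', hC', htwo⟩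
  choose C hC htwo using hC
  obtain ⟨q, hq⟩ := IsRingState.exists_of_zero_mem hR
  obtain ⟨E, hE⟩ := h𝓕.exists_isRingAssembly hq hC fun i _ _ => htwo i
  exact ⟨_, q, C, E, hE, rfl⟩

lemma card_sum (h𝓕 : IsBranchDefense G c R a 𝓕) (h : IsRingAssembly R 𝓕 q C E) :
    Multiset.card (∑ i, E i) = ∑ i, a i + R.card + Rᶜ.card / 2 + 1 := by
  have hcard : ∀ i, Multiset.card (E i) = a i + q i := by
    intro i
    have hi := congrArg Multiset.card (h.eq i)
    have := (h𝓕.isRootedDefense i).card_eq _ (h.mem i)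
    simp only [Multiset.card_add, Multiset.card_replicate, Multiset.card_map] at hi
    omega
  rw [Multiset.card_sum, Finset.sum_congr rfl fun i _ => hcard i, Finset.sum_add_distrib,
    h.isRingState.sum_eq]
  ring

lemma root_mem (h𝓕 : IsBranchDefense G c R a 𝓕) (h : IsRingAssembly R 𝓕 q C E) {i : Fin (n + 1)}
    (hi : i ∈ R ∨ 0 < q i) : c i ∈ E i := by
  have := h.count_root i
  have := (h𝓕.two_le_count_add h.isRingState (h.mem i) (h.two_le_count i)).2 hi
  exact Multiset.count_pos.1 (by omega)

lemma isCover (h𝓕 : IsBranchDefense G c R a 𝓕) (hG : G.Connected)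
    (h : IsRingAssembly R 𝓕 q C E) : IsCover G {v | v ∈ ∑ i, E i} := by
  have hsum : ∀ i v, v ∈ E i → v ∈ ∑ i, E i := fun i v hv =>
    Multiset.mem_sum.2 ⟨i, Finset.mem_univ i, hv⟩
  intro u v huv
  rcases mem_branch_or_eq_of_adj hG c huv with ⟨i, hu, hv⟩ | ⟨i, hi⟩
  · have hiR : i ∈ R := by
      by_contra hi
      exact huv.ne (h𝓕.subsingleton i hi hu hv)
    have hmem : ∀ w : branch G c i, w ∈ C i → (w : V) ∈ ∑ i, E i := by
      intro w hw
      by_cases hwc : (w : V) = c i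
      · exact hsum i _ (hwc ▸ h𝓕.root_mem h (.inl hiR))
      · exact hsum i _ (h.mem_of_mem hw hwc)
    have huv' : (G.induce (branch G c i)).Adj ⟨u, hu⟩ ⟨v, hv⟩ := huv
    exact ((h𝓕.isRootedDefense i).isCover _ (h.mem i) huv').imp (hmem _) (hmem _)
  · have hcover := (h.isRingState.pos_or_pos i).imp (fun hp => hsum i _ (h𝓕.root_mem h (.inr hp)))
      fun hp => hsum (i + 1) _ (h𝓕.root_mem h (.inr hp))
    rcases hi with ⟨rfl, rfl⟩ | ⟨rfl, rfl⟩
    exacts [hcover, hcover.symm]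

lemma exists_defend_of_mem_branch (h𝓕 : IsBranchDefense G c R a 𝓕) (hc : IsRing G c)
    (h : IsRingAssembly R 𝓕 q C E) {i : Fin (n + 1)} {u v : branch G c i}
    (huv : (G.induce (branch G c i)).Adj u v) :
    ∃ D ∈ assembledFamily R 𝓕, ∃ M, ValidMove G (∑ i, E i) D M ∧
      (((u : V), (v : V)) ∈ M ∨ ((v : V), (u : V)) ∈ M) ∧
      ∀ j, (∑ i, E i).count (c j) ≤ M.count (c j, c j) + 1 := by
  have hiR : i ∈ R := by
    by_contra hi
    exact huv.ne (Subtype.ext (h𝓕.subsingleton i hi u.2 v.2))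
  obtain ⟨q', r, l, hq', hmove, htwo, hout⟩ := h.isRingState.exists_transfer hiR
  have hchoice : ∀ j, ∃ C' ∈ 𝓕 j, ∃ N, ValidMove (G.induce (branch G c j)) (C j) C' N ∧
      (2 ≤ C'.count (branchRoot G c j) ∧
        (C j).count (branchRoot G c j) ≤ N.count (branchRoot G c j, branchRoot G c j) ∨
      j ∈ R ∧ q' j = 2 ∧ r j + l (j - 1) = 0 ∧ (C j).count (branchRoot G c j) ≤
        N.count (branchRoot G c j, branchRoot G c j) + 1) ∧
      ∀ hj : j = i, (hj ▸ u, hj ▸ v) ∈ N ∨ (hj ▸ v, hj ▸ u) ∈ N := by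
    intro j
    by_cases hj : j = i
    · subst hj
      obtain ⟨C', hC', N, hN, hmem, hcount⟩ :=
        (h𝓕.isRootedDefense j).exists_defend (C j) (h.mem j) u v huv
      exact ⟨C', hC', N, hN, .inr ⟨hiR, htwo, hout, hcount⟩, fun _ => hmem⟩
    · obtain ⟨C', hC', N, hN, hcount⟩ := (h𝓕.isRootedDefense j).exists_reinforce (C j) (h.mem j)
      exact ⟨C', hC', N, hN, .inl hcount, fun hji => (hj hji).elim⟩
  choose C' hC' N hN hcase hmem using hchoice
  obtain ⟨E', h', M, hM, hNM, -, -, hcount⟩ := h𝓕.exists_validMove_sum hc h hq' hmove hC' hN hcase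
  refine ⟨_, ⟨q', C', E', h', rfl⟩, M, hM, (hmem i rfl).imp (hNM i u v · huv.ne)
    (hNM i v u · huv.ne'), fun j => ?_⟩
  have := hcount j
  have := hmove.out_le_one j
  have := hcase j
  omega

lemma isRootedDefense_assembledFamily (h𝓕 : IsBranchDefense G c R a 𝓕) (hG : G.Connected)
    (hc : IsRing G c) (hR : 0 ∈ R) :
    IsRootedDefense G (c 0) (∑ i, a i + R.card + Rᶜ.card / 2 + 1) (assembledFamily R 𝓕) where
  nonempty := h𝓕.assembledFamily_nonempty hR
  card_eq := by
    rintro _ ⟨q, C, E, h, rfl⟩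
    exact h𝓕.card_sum h
  isCover := by
    rintro _ ⟨q, C, E, h, rfl⟩
    exact h𝓕.isCover hG h
  root_mem := by
    rintro _ ⟨q, C, E, h, rfl⟩
    exact Multiset.mem_sum.2 ⟨0, Finset.mem_univ 0, h𝓕.root_mem h (.inl hR)⟩
  exists_defend := by
    rintro _ ⟨q, C, E, h, rfl⟩ u v huv
    rcases mem_branch_or_eq_of_adj hG c huv with ⟨i, hu, hv⟩ | ⟨i, hi⟩
    · obtain ⟨D, hD, M, hM, hmem, hcount⟩ :=
        h𝓕.exists_defend_of_mem_branch hc h (u := ⟨u, hu⟩) (v := ⟨v, hv⟩) huv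
      exact ⟨D, hD, M, hM, hmem, hcount 0⟩
    · obtain ⟨q', r, l, hq', hmove, hrl⟩ := h.isRingState.exists_flip i
      obtain ⟨C', E', h', -, M, hM, hr, hl, hcount⟩ := h𝓕.exists_reinforcing_move hc h hq' hmove
      refine ⟨_, ⟨q', C', E', h', rfl⟩, M, hM, ?_,
        (hcount 0).trans (Nat.add_le_add_left (hmove.out_le_one 0) _)⟩
      have hmem := hrl.imp (hr i) (hl i)
      rcases hi with ⟨rfl, rfl⟩ | ⟨rfl, rfl⟩
      exacts [hmem, hmem.symm]
  exists_reinforce := by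
    rintro _ ⟨q, C, E, h, rfl⟩
    obtain ⟨q', r, l, hq', hmove, htwo, hout⟩ := h.isRingState.exists_transfer hR
    obtain ⟨C', E', h', hC', M, hM, -, -, hcount⟩ := h𝓕.exists_reinforcing_move hc h hq' hmove
    refine ⟨_, ⟨q', C', E', h', rfl⟩, M, hM, ?_, ?_⟩
    · have := h'.count_root 0
      have := h'.count_sum hc 0
      have := hC' 0
      omega
    · have := hcount 0
      omega

end IsBranchDefense

end Assembly

section LowerBound

variable {G : SimpleGraph V}

lemma ValidMove.guardsOn_lt {C C' : Multiset V} {M : Multiset (V × V)} (hM : ValidMove G C C' M)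
    {T : Set V} (hT : ∀ p ∈ M, p.2 ∈ T → p.1 ∈ T) {p : V × V} (hp : p ∈ M) (hp₁ : p.1 ∈ T)
    (hp₂ : p.2 ∉ T) : guardsOn C' T < guardsOn C T := by
  classical
  obtain ⟨rfl, rfl, -⟩ := hM
  simp only [guardsOn, Multiset.filter_map, Multiset.card_map]
  refine Multiset.card_lt_card (lt_of_le_of_ne ?_ fun heq => ?_)
  · have hfilter := Multiset.filter_congr fun q hq => (and_iff_right_of_imp (hT q hq)).symm
    exact hfilter.trans_le (Multiset.monotone_filter_right M fun _ => And.left)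
  · have hmem := heq ▸ Multiset.mem_filter (p := (· ∈ T) ∘ Prod.fst).2 ⟨hp, hp₁⟩
    exact hp₂ (Multiset.mem_filter.1 hmem).2

/-- If `u` is unoccupied, only a guard from `w` can defend `uw`, so a region containing `w` but not
`u` loses a guard when none can enter it. -/
lemma IsDefense.exists_guardsOn_lt {k : ℕ} {F : Set (Multiset V)} (hF : IsDefense G k F)
    {C : Multiset V} (hC : C ∈ F) {u w : V} {T : Set V} (huw : G.Adj u w) (huC : u ∉ C)
    (hu : u ∉ T) (hw : w ∈ T)
    (hT : ∀ s, ∀ t ∈ T, G.Adj s t → s ∉ T → s ∉ C) :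
    ∃ C' ∈ F, guardsOn C' T < guardsOn C T := by
  obtain ⟨C', hC', M, hM, hmem⟩ := hF.2.2 C hC u w huw
  have hsource : ∀ p ∈ M, p.1 ∈ C := fun p hp => hM.1 ▸ Multiset.mem_map_of_mem Prod.fst hp
  refine ⟨C', hC', hM.guardsOn_lt (fun p hp hp₂ => ?_)
    (hmem.resolve_left fun hp => huC (hsource _ hp)) hw hu⟩
  rcases hM.2.2 p hp with heq | hadj
  · exact heq ▸ hp₂
  · by_contra hp₁
    exact hT p.1 p.2 hp₂ hadj hp₁ (hsource p hp)

variable {V' : Type} {G' : SimpleGraph V'} {ι : G ↪g G'} {x : V}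

/-- The copy of `G` in `G'` is joined to the rest of `G'` only at the copy of `x`. -/
def IsAttachedAt (ι : G ↪g G') (x : V) : Prop :=
  ∀ u ≠ x, ∀ v', G'.Adj (ι u) v' → v' ∈ Set.range ι

/-- Wherever `G` is attached at `x` to a larger graph, at least `a` guards of every eternal vertex
cover configuration are on `G - x`. -/
def ForcesGuards (G : SimpleGraph V) (x : V) (a : ℕ) : Prop :=
  ∀ (V' : Type) (G' : SimpleGraph V') (ι : G ↪g G'), IsAttachedAt ι x →
    ∀ C, IsEvcConfig G' C → a ≤ guardsOn C (ι '' {x}ᶜ)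

lemma ForcesGuards.add_one_le_guardsOn_range [Nontrivial V] {a : ℕ} (h : ForcesGuards G x a)
    (hG : G.Connected) (hι : IsAttachedAt ι x) {C : Multiset V'} (hC : IsEvcConfig G' C) :
    a + 1 ≤ guardsOn C (Set.range ι) := by
  obtain ⟨k, F, hF, hC⟩ := hC
  have ha : ∀ C ∈ F, a ≤ guardsOn C (ι '' {x}ᶜ) := fun C hC => h _ _ ι hι C ⟨k, F, hF, hC⟩
  have hx : ι x ∉ ι '' {x}ᶜ := fun ⟨_, hv, hvx⟩ => hv (ι.injective hvx)
  have hsplit : guardsOn C (Set.range ι) = guardsOn C (ι '' {x}ᶜ) + guardsOn C {ι x} := by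
    rw [← guardsOn_union C (Set.disjoint_singleton_right.2 hx), ← Set.image_singleton,
      ← Set.image_union, Set.compl_union_self, Set.image_univ]
  have hle := ha C hC
  by_cases hxC : ι x ∈ C
  · have := guardsOn_pos hxC (Set.mem_singleton _)
    omega
  · obtain ⟨y, hxy⟩ := hG.preconnected.exists_adj_of_nontrivial x
    obtain ⟨C', hC', hlt⟩ := hF.exists_guardsOn_lt hC (ι.map_adj_iff.2 hxy) hxC hx
      (Set.mem_image_of_mem ι hxy.ne') fun s t ht hst hs => by
        obtain ⟨v, hv, rfl⟩ := ht
        obtain ⟨u, rfl⟩ := hι v hv s hst.symm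
        obtain rfl : u = x := by_contra fun hu => hs (Set.mem_image_of_mem ι hu)
        exact hxC
    have := ha C' hC'
    omega

lemma ForcesGuards.le_guardsOn_image {S : Set V} {x : S} {a : ℕ}
    (h : ForcesGuards (G.induce S) x a) (hι : IsAttachedAt ((Embedding.induce S).trans ι) x)
    {C : Multiset V'} (hC : IsEvcConfig G' C) : a ≤ guardsOn C (ι '' (S \ {↑x})) := by
  refine (h V' G' _ hι C hC).trans (guardsOn_mono C ?_)
  rintro _ ⟨u, hu, rfl⟩
  exact ⟨u, ⟨u.2, fun h => hu (Subtype.ext h)⟩, rfl⟩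

lemma ForcesGuards.add_one_le_guardsOn_image {S : Set V} [Nontrivial S] {x : S} {a : ℕ}
    (h : ForcesGuards (G.induce S) x a) (hS : (G.induce S).Connected)
    (hι : IsAttachedAt ((Embedding.induce S).trans ι) x) {C : Multiset V'}
    (hC : IsEvcConfig G' C) : a + 1 ≤ guardsOn C (ι '' S) := by
  refine (h.add_one_le_guardsOn_range hS hι hC).trans (guardsOn_mono C ?_)
  rintro _ ⟨u, rfl⟩
  exact ⟨u, u.2, rfl⟩

end LowerBound

section RingLowerBound

variable {V' : Type} {G : SimpleGraph V} {G' : SimpleGraph V'} {ι : G ↪g G'} {n : ℕ}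
  {c : Fin (n + 1) → V} {k : ℕ} {F : Set (Multiset V')} {w : Fin (n + 1) → ℕ}

lemma IsRing.exists_mem_branch_of_adj (hc : IsRing G c) (hG : G.Connected)
    (hι : IsAttachedAt ι (c 0)) {i : Fin (n + 1)} {u : V} (hu : u ∈ branch G c i) (hu₀ : u ≠ c 0)
    {v' : V'} (huv : G'.Adj (ι u) v') :
    ∃ v, ι v = v' ∧ (v ∈ branch G c i ∨ u = c i ∧ ∃ j, v = c j ∧ (j = i + 1 ∨ i = j + 1)) := by
  obtain ⟨v, rfl⟩ := hι u hu₀ v' huv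
  refine ⟨v, rfl, ?_⟩
  rcases mem_branch_or_eq_of_adj hG c (ι.map_adj_iff.1 huv) with
    ⟨j, huj, hv⟩ | ⟨j, ⟨rfl, rfl⟩ | ⟨rfl, rfl⟩⟩
  · exact .inl (hc.eq_of_mem huj hu ▸ hv)
  · obtain rfl := hc.eq_of_mem (root_mem_branch G c j) hu
    exact .inr ⟨rfl, _, rfl, .inl rfl⟩
  · obtain rfl := hc.eq_of_mem (root_mem_branch G c (j + 1)) hu
    exact .inr ⟨rfl, _, rfl, .inr rfl⟩

lemma IsRing.isAttachedAt_branch (hc : IsRing G c) (hG : G.Connected)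
    (hι : IsAttachedAt ι (c 0)) (i : Fin (n + 1)) :
    IsAttachedAt ((Embedding.induce (branch G c i)).trans ι) (branchRoot G c i) := by
  intro u hu v' huv
  have hui : (u : V) ≠ c i := fun h => hu (Subtype.ext h)
  have hu₀ : (u : V) ≠ c 0 := fun h =>
    hui (h.trans (congrArg c (hc.eq_of_mem (h ▸ root_mem_branch G c 0) u.2)))
  obtain ⟨v, rfl, hv | hu'⟩ := hc.exists_mem_branch_of_adj hG hι u.2 hu₀ huv
  · exact ⟨⟨v, hv⟩, rfl⟩
  · exact (hui hu'.1).elim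

lemma eq_or_eq_of_notMem_Ioo {i j k m : Fin (n + 1)} (hk : k ∈ Finset.Ioo i j)
    (hm : m ∉ Finset.Ioo i j) (h : m = k + 1 ∨ k = m + 1) : m = i ∨ m = j := by
  simp only [Finset.mem_Ioo, not_and, not_lt, Fin.lt_def, Fin.ext_iff, Fin.val_add_one,
    Fin.val_last] at *
  have := j.2
  split_ifs at h <;> omega

lemma add_one_mem_Ioo {i j : Fin (n + 1)} (hij : i < j) (hne : i + 1 ≠ j) :
    i + 1 ∈ Finset.Ioo i j := by
  have hlast := hij.trans_le (Fin.le_last j)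
  refine Finset.mem_Ioo.2 ⟨Fin.lt_add_one_iff.2 hlast, lt_of_le_of_ne ?_ hne⟩
  rw [Fin.le_def, Fin.val_add_one_of_lt hlast]
  exact hij

lemma IsRing.eq_or_eq_of_adj_iUnion_branch (hc : IsRing G c) (hG : G.Connected)
    (hι : IsAttachedAt ι (c 0)) {i j : Fin (n + 1)} {s t : V'}
    (ht : t ∈ ⋃ k ∈ Finset.Ioo i j, ι '' branch G c k) (hst : G'.Adj s t)
    (hs : s ∉ ⋃ k ∈ Finset.Ioo i j, ι '' branch G c k) : s = ι (c i) ∨ s = ι (c j) := by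
  obtain ⟨k, hk, u, hu, rfl⟩ := Set.mem_iUnion₂.1 ht
  have hu₀ : u ≠ c 0 := by
    rintro rfl
    obtain rfl := hc.eq_of_mem hu (root_mem_branch G c 0)
    simp at hk
  obtain ⟨v, rfl, hv | ⟨-, m, rfl, hm⟩⟩ := hc.exists_mem_branch_of_adj hG hι hu hu₀ hst.symm
  · exact (hs (Set.mem_iUnion₂.2 ⟨k, hk, Set.mem_image_of_mem ι hv⟩)).elim
  · have hmem : m ∉ Finset.Ioo i j := fun hm => hs
      (Set.mem_iUnion₂.2 ⟨m, hm, Set.mem_image_of_mem ι (root_mem_branch G c m)⟩)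
    exact (eq_or_eq_of_notMem_Ioo hk hmem hm).imp (congrArg (ι ∘ c)) (congrArg (ι ∘ c))

lemma IsRing.pairwiseDisjoint_image_branch (hc : IsRing G c) (ι : G ↪g G')
    (s : Set (Fin (n + 1))) : s.PairwiseDisjoint fun i => ι '' branch G c i :=
  fun _ _ _ _ hij => (Set.disjoint_image_iff ι.injective).2 (hc.disjoint_branch hij)

/-- If the ring vertices `c i` and `c j` are unoccupied, the branches strictly between them are
sealed off, and an attack on the edge from `c i` into them takes away a guard they cannot spare. -/
lemma IsRing.exists_lt_guardsOn_branch (hc : IsRing G c) (hG : G.Connected)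
    (hι : IsAttachedAt ι (c 0)) (hF : IsDefense G' k F)
    (hw : ∀ C ∈ F, ∀ i ≠ 0, w i ≤ guardsOn C (ι '' branch G c i)) {C : Multiset V'} (hC : C ∈ F)
    {i j : Fin (n + 1)} (hi₀ : i ≠ 0) (hij : i < j) (hi : w i = 0) (hj : w j = 0) :
    ∃ k, i ≤ k ∧ k ≤ j ∧ w k < guardsOn C (ι '' branch G c k) := by
  by_contra! hle
  have hnot_mem : ∀ m, i ≤ m → m ≤ j → w m = 0 → ι (c m) ∉ C := by
    intro m him hmj hm hmem
    have := guardsOn_pos hmem (Set.mem_image_of_mem ι (root_mem_branch G c m))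
    have := hle m him hmj
    omega
  have hci := hnot_mem i le_rfl hij.le hi
  have hcj := hnot_mem j hij.le le_rfl hj
  have hadj := ι.map_adj_iff.2 (hc.adj i)
  have hne : i + 1 ≠ j := by
    rintro rfl
    exact ((hF.2.1 C hC).2 hadj).elim hci hcj
  have hsucc := add_one_mem_Ioo hij hne
  obtain ⟨C', hC', hlt⟩ := hF.exists_guardsOn_lt hC (T := ⋃ k ∈ Finset.Ioo i j, ι '' branch G c k)
    hadj hci
    (fun hmem => by
      obtain ⟨k, hk, u, hu, hui⟩ := Set.mem_iUnion₂.1 hmem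
      obtain rfl := hc.eq_of_mem hu (ι.injective hui ▸ root_mem_branch G c i)
      simp at hk)
    (Set.mem_iUnion₂.2 ⟨i + 1, hsucc, Set.mem_image_of_mem ι (root_mem_branch G c (i + 1))⟩)
    fun s t ht hst hs => by
      rcases hc.eq_or_eq_of_adj_iUnion_branch hG hι ht hst hs with rfl | rfl
      exacts [hci, hcj]
  have hdisj := hc.pairwiseDisjoint_image_branch ι (Finset.Ioo i j : Finset _)
  rw [guardsOn_biUnion _ C hdisj, guardsOn_biUnion _ C' hdisj] at hlt
  refine hlt.not_ge (Finset.sum_le_sum fun m hm => ?_)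
  have hm' := Finset.mem_Ioo.1 hm
  exact (hle m hm'.1.le hm'.2.le).trans (hw C' hC' m fun h => by simp [h] at hm)

lemma IsRing.add_sum_add_card_div_two_le_guardsOn (hc : IsRing G c) (hG : G.Connected)
    (hι : IsAttachedAt ι (c 0)) (hF : IsDefense G' k F)
    (hw : ∀ C ∈ F, ∀ i ≠ 0, w i ≤ guardsOn C (ι '' branch G c i)) {C : Multiset V'} (hC : C ∈ F)
    {N : Finset (Fin (n + 1))} (hN : ∀ i ∈ N, i ≠ 0 ∧ w i = 0) :
    guardsOn C (ι '' (branch G c 0 \ {c 0})) + ∑ i ∈ Finset.univ.erase 0, w i + N.card / 2 ≤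
      guardsOn C (ι '' {c 0}ᶜ) := by
  have hslack : N.card / 2 ≤
      ∑ i ∈ Finset.univ.erase 0, (guardsOn C (ι '' branch G c i) - w i) := by
    refine card_div_two_le_sum _ N _ fun i hi j hj hij => ?_
    obtain ⟨k, hik, hkj, hk⟩ := hc.exists_lt_guardsOn_branch hG hι hF hw hC (hN i hi).1 hij
      (hN i hi).2 (hN j hj).2
    refine ⟨k, Finset.mem_erase.2 ⟨?_, Finset.mem_univ k⟩, hik, hkj, Nat.sub_pos_of_lt hk⟩
    exact fun h => (hN i hi).1 (Fin.le_zero_iff.1 (h ▸ hik))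
  have hsum : ∑ i ∈ Finset.univ.erase 0, w i +
      ∑ i ∈ Finset.univ.erase 0, (guardsOn C (ι '' branch G c i) - w i) =
      ∑ i ∈ Finset.univ.erase 0, guardsOn C (ι '' branch G c i) := by
    rw [← Finset.sum_add_distrib]
    exact Finset.sum_congr rfl fun i hi =>
      Nat.add_sub_cancel' (hw C hC i (Finset.ne_of_mem_erase hi))
  have hsub : ι '' (branch G c 0 \ {c 0}) ∪ ⋃ i ∈ Finset.univ.erase 0, ι '' branch G c i ⊆
      ι '' {c 0}ᶜ := by
    refine Set.union_subset (Set.image_mono fun v hv => hv.2) (Set.iUnion₂_subset fun i hi => ?_)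
    refine Set.image_mono fun v hv hv₀ => Finset.ne_of_mem_erase hi ?_
    exact hc.eq_of_mem hv (hv₀ ▸ root_mem_branch G c 0)
  have hdisj : Disjoint (ι '' (branch G c 0 \ {c 0}))
      (⋃ i ∈ Finset.univ.erase 0, ι '' branch G c i) := by
    refine Set.disjoint_iUnion₂_right.2 fun i hi => (Set.disjoint_image_iff ι.injective).2 ?_
    exact (hc.disjoint_branch (Finset.ne_of_mem_erase hi).symm).mono_left Set.sdiff_subset
  have hle := guardsOn_mono C hsub
  rw [guardsOn_union C hdisj, guardsOn_biUnion _ C (hc.pairwiseDisjoint_image_branch ι _)] at hle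
  omega

lemma ForcesGuards.of_branches (hG : G.Connected) (hc : IsRing G c) {a : Fin (n + 1) → ℕ}
    (ha : ∀ i, ForcesGuards (G.induce (branch G c i)) (branchRoot G c i) (a i))
    {R : Finset (Fin (n + 1))} (hR : 0 ∈ R) (hR' : ∀ i ≠ 0, i ∈ R ↔ (branch G c i).Nontrivial) :
    ForcesGuards G (c 0) (∑ i, a i + (R.erase 0).card + Rᶜ.card / 2) := by
  rintro V' G' ι hι C ⟨k, F, hF, hC⟩
  have hconfig : ∀ C ∈ F, IsEvcConfig G' C := fun C hC => ⟨k, F, hF, hC⟩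
  have hattached := hc.isAttachedAt_branch hG hι
  have ha_le : ∀ i, ∀ C ∈ F, a i ≤ guardsOn C (ι '' (branch G c i \ {c i})) := fun i C hC =>
    (ha i).le_guardsOn_image (hattached i) (hconfig C hC)
  have ha_lt : ∀ i ≠ 0, i ∈ R → ∀ C ∈ F, a i + 1 ≤ guardsOn C (ι '' branch G c i) := by
    intro i hi hiR C hC
    have := ((hR' i hi).1 hiR).coe_sort
    exact (ha i).add_one_le_guardsOn_image (connected_induce_branch i) (hattached i) (hconfig C hC)
  have ha_eq : ∀ i ∉ R, a i = 0 := by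
    intro i hi
    have hsub := Set.not_nontrivial_iff.1 (mt (hR' i fun h => hi (h ▸ hR)).2 hi)
    refine Nat.le_zero.1 ((ha_le i C hC).trans_eq (guardsOn_eq_zero fun v _ hv => ?_))
    obtain ⟨u, hu, -⟩ := hv
    exact hu.2 (hsub hu.1 (root_mem_branch G c i))
  have hw : ∀ C ∈ F, ∀ i ≠ 0, a i + (if i ∈ R then 1 else 0) ≤ guardsOn C (ι '' branch G c i) := by
    intro C hC i hi
    split_ifs with hiR
    · exact ha_lt i hi hiR C hC
    · rw [ha_eq i hiR]
      exact Nat.zero_le _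
  have hmain := hc.add_sum_add_card_div_two_le_guardsOn hG hι hF hw hC (N := Rᶜ) fun i hi => by
    have hi := Finset.mem_compl.1 hi
    exact ⟨fun h => hi (h ▸ hR), by rw [ha_eq i hi, if_neg hi]⟩
  have hcard : (Finset.univ.erase 0).filter (· ∈ R) = R.erase 0 := by
    ext i
    simp
  rw [Finset.sum_add_distrib, ← Finset.card_filter, hcard] at hmain
  have := ha_le 0 C hC
  have := Finset.add_sum_erase Finset.univ a (Finset.mem_univ 0)
  omega

end RingLowerBound

section Cactus

lemma isRootedDefense_of_subsingleton [Subsingleton V] [DecidableEq V] (G : SimpleGraph V)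
    (x : V) : IsRootedDefense G x 2 {Multiset.replicate 2 x} where
  nonempty := Set.singleton_nonempty _
  card_eq := by simp
  isCover _ _ u v huv := (huv.ne (Subsingleton.elim u v)).elim
  root_mem := by simp
  exists_defend _ _ u v huv := (huv.ne (Subsingleton.elim u v)).elim
  exists_reinforce := by
    rintro _ rfl
    exact ⟨_, rfl, _, .replicate (.inl rfl) 2, by simp⟩

theorem IsCactus.exists_forcesGuards_isRootedDefense {V : Type} [Finite V] [DecidableEq V]
    {G : SimpleGraph V} (hG : IsCactus G) (x : V) :
    ∃ a, ForcesGuards G x a ∧ ∃ 𝓕, IsRootedDefense G x (a + 2) 𝓕 := by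
  classical
  rcases subsingleton_or_nontrivial V with _ | _
  · exact ⟨0, fun _ _ _ _ _ _ => Nat.zero_le _, _, isRootedDefense_of_subsingleton G x⟩
  obtain ⟨n, c, rfl, hc⟩ := hG.exists_isRing x
  have hbranch : ∀ i, ∃ a, ForcesGuards (G.induce (branch G c i)) (branchRoot G c i) a ∧
      ∃ 𝓕, IsRootedDefense (G.induce (branch G c i)) (branchRoot G c i) (a + 2) 𝓕 := fun i =>
    (hG.induce (connected_induce_branch i)).exists_forcesGuards_isRootedDefense (branchRoot G c i)
  choose a ha 𝓕 h𝓕 using hbranch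
  let R : Finset (Fin (n + 1)) := insert 0 (Finset.univ.filter fun i => (branch G c i).Nontrivial)
  have hR : 0 ∈ R := Finset.mem_insert_self 0 _
  have hR' : ∀ i ≠ 0, i ∈ R ↔ (branch G c i).Nontrivial := fun i hi => by simp [R, hi]
  have h𝓕R : IsBranchDefense G c R a 𝓕 := ⟨h𝓕, fun i hi =>
    Set.not_nontrivial_iff.1 (mt (hR' i fun h => hi (h ▸ hR)).2 hi)⟩
  refine ⟨_, .of_branches hG.1 hc ha hR hR', IsBranchDefense.assembledFamily R 𝓕, ?_⟩
  convert h𝓕R.isRootedDefense_assembledFamily hG.1 hc hR using 1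
  have := Finset.card_erase_add_one hR
  omega
termination_by Nat.card V
decreasing_by exact hc.card_branch_lt i

variable {G : SimpleGraph V} {V' : Type} {G' : SimpleGraph V'}

theorem cactus_substructure_general [Finite V] [Nontrivial V] (hG : IsCactus G) (x : V)
    (ι : G ↪g G') (hι : IsAttachedAt ι x) {C : Multiset V'} (hC : IsEvcConfig G' C) :
    (evc (addPendant G x) ≤ evcOn G {x} → evcOn G {x} - 1 ≤ guardsOn C (Set.range ι)) ∧
      (evcOn G {x} < evc (addPendant G x) → evcOn G {x} ≤ guardsOn C (Set.range ι)) := by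
  classical
  obtain ⟨a, ha, 𝓕, h𝓕⟩ := hG.exists_forcesGuards_isRootedDefense x
  have hguards := ha.add_one_le_guardsOn_range hG.1 hι hC
  have hroot := h𝓕.evcOn_le
  have hpendant := h𝓕.evc_addPendant_le
  omega

lemma isAttachedAt_xCompSet {x : V} {x' : V'} {H : (delVert G' x').ConnectedComponent}
    (φ : G ≃g G'.induce (xCompSet G' x' H)) (hφ : (φ x : V') = x') :
    IsAttachedAt (φ.toEmbedding.trans (Embedding.induce _)) x := by
  intro u hu v' huv
  have hv' : v' ∈ xCompSet G' x' H := by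
    rcases eq_or_ne v' x' with rfl | hvx
    · exact x_mem_xCompSet G' v' H
    rcases (φ u).2 with hux | ⟨u', hu', huu'⟩
    · exact (hu (φ.injective (Subtype.ext (hux.trans hφ.symm)))).elim
    · have hadj : (delVert G' x').Adj u' ⟨v', hvx⟩ := by
        change G'.Adj u' v'
        exact huu' ▸ huv
      exact .inr ⟨⟨v', hvx⟩, H.mem_supp_of_adj_mem_supp hu' hadj, rfl⟩
  exact ⟨φ.symm ⟨v', hv'⟩, congrArg Subtype.val (φ.apply_symm_apply ⟨v', hv'⟩)⟩

lemma nontrivial_xCompSet {x : V'} (H : (delVert G' x).ConnectedComponent) :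
    (xCompSet G' x H).Nontrivial := by
  obtain ⟨v, hv⟩ := H.nonempty_supp
  exact ⟨x, x_mem_xCompSet G' x H, v, .inr ⟨v, hv, rfl⟩, v.2.symm⟩

lemma nontrivial_of_iso_xCompSet {x' : V'} {H : (delVert G' x').ConnectedComponent}
    (φ : G ≃g G'.induce (xCompSet G' x' H)) : Nontrivial V :=
  have := (nontrivial_xCompSet H).coe_sort
  φ.toEquiv.nontrivial

lemma range_toEmbedding_trans_induce {S : Set V'} (φ : G ≃g G'.induce S) :
    Set.range (φ.toEmbedding.trans (Embedding.induce S)) = S :=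
  (φ.surjective.range_comp Subtype.val).trans Subtype.range_coe

end Cactus

/-- Every cactus graph satisfies the substructure property. -/
theorem cactus_substructure (V : Type) [Finite V] (G : SimpleGraph V)
    (hG : IsCactus G) : SubstructureProperty G := by
  intro x _ V' _ G' x' _ _ H φ hφ C hC
  have := nontrivial_of_iso_xCompSet φ
  simpa only [range_toEmbedding_trans_induce] using
    cactus_substructure_general hG x _ (isAttachedAt_xCompSet φ hφ) hC

end EVC
end

section
/- Every biconnected chordal graph satisfies the substructure property. -/
open SimpleGraph

namespace EVC

variable {V : Type}

/-!
A vertex cover `S` that induces a connected subgraph carries a defense strategy with `|S| + 1`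
guards, one on each vertex of `S` and one extra: an attack on `uv` with `u ∈ S` is answered by
shifting all guards one step along a path through `S` from the extra guard to `u` and on to `v`, so
that `v` receives the extra guard. If `S` contains `x`, it is also a connected vertex cover of
`G_x^+`. Hence, once every vertex cover of `G` induces a connected subgraph, both `evc_x(G)` and
`evc(G_x^+)` are at most `mvc_x(G) + 1`.

Conversely, every eternal vertex cover configuration of an `x`-extension has at least `mvc_x(G)`
guards on `G`: if `x` is not occupied, attacking an edge of `G` at `x` brings a guard of `G` onto
`x`, while guards can enter `G` from outside only through `x`.

Finally, let `G` be chordal without cut vertices. A shortest path in `G - i` between two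
non-adjacent neighbours of `i` is induced, so the cycle closing it through `i` has a chord at `i`;
by induction, the two neighbours are connected inside the neighbourhood of `i`. As a vertex missing
from a vertex cover has its whole neighbourhood in the cover, walks can be detoured around such
vertices, so every vertex cover induces a connected subgraph.
-/

section MinimumCover

variable {V' : Type} {G : SimpleGraph V} {G' : SimpleGraph V'}

lemma mvcOn_le {S T : Set V} (hT : IsCover G T) (hST : S ⊆ T) : mvcOn G S ≤ Nat.card T :=
  Nat.sInf_le ⟨T, hT, hST, rfl⟩

lemma exists_isCover_card_eq_mvcOn (G : SimpleGraph V) (S : Set V) :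
    ∃ T : Set V, IsCover G T ∧ S ⊆ T ∧ Nat.card T = mvcOn G S :=
  Nat.sInf_mem (s := {k | ∃ T : Set V, IsCover G T ∧ S ⊆ T ∧ Nat.card T = k})
    ⟨_, Set.univ, fun _ _ _ => Or.inl trivial, S.subset_univ, rfl⟩

lemma mvcOn_le_mvcOn_image_iso (φ : G ≃g G') (S : Set V) : mvcOn G S ≤ mvcOn G' (φ '' S) := by
  obtain ⟨T, hT, hST, hcard⟩ := exists_isCover_card_eq_mvcOn G' (φ '' S)
  have hpre : IsCover G (φ ⁻¹' T) := fun _ _ huv => hT (φ.map_adj_iff.2 huv)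
  rw [← hcard, ← Nat.card_preimage_of_injective φ.injective (by simp [φ.surjective.range_eq])]
  exact mvcOn_le hpre (Set.image_subset_iff.1 hST)

end MinimumCover

section LowerBound

variable {G : SimpleGraph V} {A : Set V} {C D : Multiset V} {x : V}

lemma guardsOn_eq_countP (C : Multiset V) (A : Set V) [DecidablePred (· ∈ A)] :
    guardsOn C A = C.countP (· ∈ A) := by
  rw [guardsOn, Multiset.countP_eq_card_filter]
  congr!

lemma card_inter_le_guardsOn (C : Multiset V) (A : Set V) :
    Nat.card ↥{v | v ∈ C ∧ v ∈ A} ≤ guardsOn C A := by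
  classical
  have h : {v | v ∈ C ∧ v ∈ A} = ((C.filter (· ∈ A)).toFinset : Set V) := by ext; simp
  rw [h, guardsOn, Nat.card_coe_set_eq, Set.ncard_coe_finset]
  exact Multiset.toFinset_card_le _

lemma mvcOn_induce_le_guardsOn_diff_succ (hD : IsCover G {v | v ∈ D}) (hx : x ∈ A) :
    mvcOn (G.induce A) {⟨x, hx⟩} ≤ guardsOn D (A \ {x}) + 1 := by
  let B : Set V := {v | v ∈ D ∧ v ∈ A \ {x}}
  have hmem : ∀ u : A, (u : V) ∈ D → (u : V) ∈ insert x B := fun u hu =>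
    or_iff_not_imp_left.2 fun hux => ⟨hu, u.2, hux⟩
  have hcover : IsCover (G.induce A) (Subtype.val ⁻¹' insert x B) := fun u v huv =>
    (hD huv).imp (hmem u) (hmem v)
  have hBA : insert x B ⊆ Set.range (Subtype.val : A → V) := by
    rw [Subtype.range_val]
    exact Set.insert_subset hx fun _ hv => hv.2.1
  calc mvcOn (G.induce A) {⟨x, hx⟩}
      ≤ Nat.card ↥(Subtype.val ⁻¹' insert x B : Set A) :=
        mvcOn_le hcover (Set.singleton_subset_iff.2 (Set.mem_insert x B))
    _ = (insert x B).ncard := Nat.card_preimage_of_injective Subtype.val_injective hBA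
    _ ≤ B.ncard + 1 := Set.ncard_insert_le x B
    _ ≤ guardsOn D (A \ {x}) + 1 := Nat.add_le_add_right (card_inter_le_guardsOn D _) 1

lemma guardsOn_diff_succ_le_of_validMove {M : Multiset (V × V)} {a : V}
    (hA : ∀ ⦃u v : V⦄, G.Adj u v → v ∈ A → v ≠ x → u ∈ A) (hM : ValidMove G C D M)
    (ha : a ∈ A) (hax : (a, x) ∈ M) : guardsOn D (A \ {x}) + 1 ≤ guardsOn C A := by
  classical
  obtain ⟨rfl, rfl, hstep⟩ := hM
  obtain ⟨N, rfl⟩ := Multiset.exists_cons_of_mem hax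
  have hN : N.countP (fun p => p.2 ∈ A \ {x}) ≤ N.countP (fun p => p.1 ∈ A) := by
    rw [Multiset.countP_eq_card_filter, Multiset.countP_eq_card_filter]
    refine Multiset.card_le_card (Multiset.le_filter.2 ⟨Multiset.filter_le _ _, fun p hp => ?_⟩)
    obtain ⟨hpN, hp, hpx⟩ := Multiset.mem_filter.1 hp
    rcases hstep p (Multiset.mem_cons_of_mem hpN) with h | h
    exacts [h ▸ hp, hA h hp hpx]
  simpa [guardsOn_eq_countP, Multiset.countP_map, ← Multiset.countP_eq_card_filter, ha] using hN

lemma IsEvcConfig.exists_validMove_mem (hC : IsEvcConfig G C) {c : V} (hxc : G.Adj x c) :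
    ∃ D M a, IsCover G {v | v ∈ D} ∧ ValidMove G C D M ∧ (a, x) ∈ M ∧ (a = x ∨ a = c) := by
  obtain ⟨k, F, ⟨-, hF, hdef⟩, hCF⟩ := hC
  by_cases hx : x ∈ C
  · exact ⟨C, C.map fun v => (v, v), x, (hF C hCF).2, ⟨by simp, by simp, by simp⟩,
      Multiset.mem_map_of_mem _ hx, Or.inl rfl⟩
  · obtain ⟨D, hD, M, hM, hatt⟩ := hdef C hCF x c hxc
    have hfst : (x, c) ∉ M := fun h => hx (hM.1 ▸ Multiset.mem_map_of_mem Prod.fst h)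
    exact ⟨D, M, c, (hF D hD).2, hM, hatt.resolve_left hfst, Or.inr rfl⟩

lemma mem_xCompSet_of_adj {H : (delVert G x).ConnectedComponent} {u v : V} (huv : G.Adj u v)
    (hv : v ∈ xCompSet G x H) (hvx : v ≠ x) : u ∈ xCompSet G x H := by
  by_cases hux : u = x
  · exact Or.inl hux
  · obtain ⟨v, hvH, rfl⟩ := hv.resolve_left hvx
    exact Or.inr ⟨⟨u, hux⟩, H.mem_supp_of_adj_mem_supp hvH huv.symm, rfl⟩

lemma exists_adj_mem_xCompSet (hG : G.Preconnected) (H : (delVert G x).ConnectedComponent) :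
    ∃ c ∈ xCompSet G x H, G.Adj x c := by
  obtain ⟨h, hH⟩ := H.nonempty_supp
  obtain ⟨p⟩ := hG h x
  obtain ⟨d, -, hfst, hsnd⟩ := p.exists_boundary_dart (xCompSet G x H \ {x})
    ⟨Or.inr ⟨h, hH, rfl⟩, h.2⟩ (fun hx => hx.2 rfl)
  have hmem : d.snd ∈ xCompSet G x H := mem_xCompSet_of_adj d.adj.symm hfst.1 hfst.2
  have hdx : d.snd = x := not_not.1 fun hne => hsnd ⟨hmem, hne⟩
  exact ⟨d.fst, hfst.1, hdx ▸ d.adj.symm⟩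

theorem mvcOn_le_guardsOn_xCompSet (hG : G.Preconnected)
    (H : (delVert G x).ConnectedComponent) (hC : IsEvcConfig G C) :
    mvcOn (G.induce (xCompSet G x H)) {⟨x, x_mem_xCompSet G x H⟩} ≤
      guardsOn C (xCompSet G x H) := by
  obtain ⟨c, hc, hxc⟩ := exists_adj_mem_xCompSet hG H
  obtain ⟨D, M, a, hD, hM, hax, ha⟩ := hC.exists_validMove_mem hxc
  have ha' : a ∈ xCompSet G x H := by
    rcases ha with rfl | rfl
    exacts [x_mem_xCompSet G a H, hc]
  exact (mvcOn_induce_le_guardsOn_diff_succ hD (x_mem_xCompSet G x H)).trans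
    (guardsOn_diff_succ_le_of_validMove (fun _ _ => mem_xCompSet_of_adj) hM ha' hax)

end LowerBound

section UpperBound

variable {G : SimpleGraph V} {x : V}

lemma exists_validMove_of_walk {C : Multiset V} {a b : V} (p : G.Walk a b)
    (hp : (p.support.dropLast : Multiset V) ≤ C) :
    ∃ D M, ValidMove G C D M ∧ a ::ₘ D = b ::ₘ C ∧ ∀ d ∈ p.darts, d.toProd ∈ M := by
  obtain ⟨R, rfl⟩ := Multiset.le_iff_exists_add.1 hp
  refine ⟨p.support.tail + R, (p.darts.map (·.toProd) : List (V × V)) + R.map fun v => (v, v),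
    ⟨?_, ?_, ?_⟩, ?_, ?_⟩
  · simp [← p.map_fst_darts, Function.comp_def]
  · simp [← p.map_snd_darts, Function.comp_def]
  · simp only [Multiset.mem_add, Multiset.mem_coe, List.mem_map, Multiset.mem_map]
    rintro _ (⟨d, -, rfl⟩ | ⟨v, -, rfl⟩)
    exacts [Or.inr d.adj, Or.inl rfl]
  · rw [← Multiset.cons_add, ← Multiset.cons_add, Multiset.cons_coe, Multiset.cons_coe,
      p.cons_tail_support]
    nth_rw 1 [← p.dropLast_support_concat]
    congr 1
    exact Multiset.coe_eq_coe.2 List.perm_append_comm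
  · exact fun d hd => Multiset.mem_add.2 (Or.inl (List.mem_map_of_mem hd))

lemma exists_isPath_of_preconnected_induce {A : Set V} (hA : (G.induce A).Preconnected) {a b : V}
    (ha : a ∈ A) (hb : b ∈ A) : ∃ p : G.Walk a b, p.IsPath ∧ ∀ v ∈ p.support, v ∈ A := by
  obtain ⟨p, hp⟩ := (hA ⟨a, ha⟩ ⟨b, hb⟩).exists_isPath
  refine ⟨p.map (Embedding.induce A).toHom, hp.map Subtype.val_injective, fun v hv => ?_⟩
  obtain ⟨w, -, rfl⟩ := List.mem_map.1 (Walk.support_map .. ▸ hv)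
  exact w.2

/-- The configurations with one guard on every vertex of `S` and one extra guard, standing on `S` or
next to it in such a way that the occupied vertices still induce a connected subgraph. -/
def extraGuardConfigs (G : SimpleGraph V) (S : Finset V) : Set (Multiset V) :=
  {C | ∃ w, (G.induce (insert w (S : Set V))).Preconnected ∧ C = w ::ₘ S.val}

lemma exists_validMove_extraGuardConfigs {S : Finset V}
    (hS : (G.induce (S : Set V)).Preconnected) {C : Multiset V} (hC : C ∈ extraGuardConfigs G S)
    {u v : V} (hu : u ∈ S) (huv : G.Adj u v) :
    ∃ D ∈ extraGuardConfigs G S, ∃ M, ValidMove G C D M ∧ (u, v) ∈ M := by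
  obtain ⟨w, hw, rfl⟩ := hC
  by_cases hv : v ∈ w ::ₘ S.val
  · -- The guards on `u` and `v` swap places, a shift along the closed walk `u, v, u`.
    let p : G.Walk u u := .cons huv (.cons huv.symm .nil)
    have hp : (p.support.dropLast : Multiset V) ≤ w ::ₘ S.val := by
      refine (Multiset.le_iff_subset (by simp [p, huv.ne])).2 fun z hz => ?_
      obtain rfl | rfl : z = u ∨ z = v := by simpa [p] using hz
      exacts [Multiset.mem_cons_of_mem hu, hv]
    obtain ⟨D, M, hM, hD, hmem⟩ := exists_validMove_of_walk p hp
    rw [Multiset.cons_inj_right] at hD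
    exact ⟨D, ⟨w, hw, hD⟩, M, hM, hmem ⟨(u, v), huv⟩ (by simp [p])⟩
  · obtain ⟨q, hq, hqS⟩ := exists_isPath_of_preconnected_induce hw (Set.mem_insert w _)
      (Set.mem_insert_of_mem w hu)
    have hp : ((q.concat huv).support.dropLast : Multiset V) ≤ w ::ₘ S.val := by
      rw [Walk.support_concat, List.dropLast_concat,
        Multiset.le_iff_subset (Multiset.coe_nodup.2 hq.support_nodup)]
      exact fun z hz => by simpa using hqS z hz
    obtain ⟨D, M, hM, hD, hmem⟩ := exists_validMove_of_walk _ hp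
    rw [Multiset.cons_swap, Multiset.cons_inj_right] at hD
    have hSv : (G.induce (insert v (S : Set V))).Preconnected := by
      rw [← Set.union_singleton]
      exact (connected_induce_union hS (t := {v}) Preconnected.of_subsingleton hu rfl
        huv).preconnected
    exact ⟨D, ⟨v, hSv, hD⟩, M, hM, hmem ⟨(u, v), huv⟩ (by simp [Walk.darts_concat])⟩

theorem isDefense_extraGuardConfigs {S : Finset V} (hS : IsCover G S)
    (hconn : (G.induce (S : Set V)).Connected) :
    IsDefense G (S.card + 1) (extraGuardConfigs G S) := by
  refine ⟨?_, ?_, ?_⟩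
  · obtain ⟨w, hw⟩ := hconn.nonempty
    exact ⟨_, w, by rw [Set.insert_eq_of_mem hw]; exact hconn.preconnected, rfl⟩
  · rintro C ⟨w, -, rfl⟩
    refine ⟨by simp, fun u v huv => ?_⟩
    exact (hS huv).imp Multiset.mem_cons_of_mem Multiset.mem_cons_of_mem
  · intro C hC u v huv
    rcases hS huv with hu | hv
    · obtain ⟨D, hD, M, hM, hmem⟩ :=
        exists_validMove_extraGuardConfigs hconn.preconnected hC hu huv
      exact ⟨D, hD, M, hM, Or.inl hmem⟩
    · obtain ⟨D, hD, M, hM, hmem⟩ :=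
        exists_validMove_extraGuardConfigs hconn.preconnected hC hv huv.symm
      exact ⟨D, hD, M, hM, Or.inr hmem⟩

lemma evc_le_of_connected_cover {S : Finset V} (hS : IsCover G S)
    (hconn : (G.induce (S : Set V)).Connected) : evc G ≤ S.card + 1 :=
  Nat.sInf_le ⟨_, isDefense_extraGuardConfigs hS hconn⟩

lemma evcOn_le_of_connected_cover {S : Finset V} (hS : IsCover G S)
    (hconn : (G.induce (S : Set V)).Connected) {X : Set V} (hX : X ⊆ S) :
    evcOn G X ≤ S.card + 1 := by
  refine Nat.sInf_le ⟨_, isDefense_extraGuardConfigs hS hconn, ?_⟩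
  rintro C ⟨w, -, rfl⟩ s hs
  exact Multiset.mem_cons_of_mem (hX hs)

lemma connected_induce_image {V' : Type} {G' : SimpleGraph V'} (f : G →g G') {S : Set V}
    (hS : (G.induce S).Connected) : (G'.induce (f '' S)).Connected :=
  hS.map (induceHom f (Set.mapsTo_image f S)) (Set.surjective_mapsTo_image_restrict f S)

/-- The inclusion of `G` into `G_x^+`. -/
def toAddPendant (G : SimpleGraph V) (x : V) : G →g addPendant G x where
  toFun := some
  map_rel' {u v} huv := by
    rw [addPendant, fromRel_adj]
    exact ⟨by simpa using huv.ne, Or.inl (Or.inl ⟨u, v, rfl, rfl, huv⟩)⟩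

lemma IsCover.image_toAddPendant {S : Set V} (hS : IsCover G S) (hx : x ∈ S) :
    IsCover (addPendant G x) (toAddPendant G x '' S) := by
  intro u v huv
  rw [addPendant, fromRel_adj] at huv
  rcases huv.2 with (⟨a, b, rfl, rfl, hab⟩ | ⟨-, rfl⟩) | (⟨a, b, rfl, rfl, hab⟩ | ⟨-, rfl⟩)
  · exact (hS hab).imp (Set.mem_image_of_mem _) (Set.mem_image_of_mem _)
  · exact Or.inr (Set.mem_image_of_mem _ hx)
  · exact (hS hab).symm.imp (Set.mem_image_of_mem _) (Set.mem_image_of_mem _)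
  · exact Or.inl (Set.mem_image_of_mem _ hx)

theorem evc_addPendant_le_of_connected_cover {S : Finset V} (hS : IsCover G S)
    (hconn : (G.induce (S : Set V)).Connected) (hx : x ∈ S) :
    evc (addPendant G x) ≤ S.card + 1 := by
  have himage : ((S.map .some : Finset (Option V)) : Set (Option V)) = toAddPendant G x '' S :=
    Finset.coe_map _ _
  rw [← S.card_map .some]
  apply evc_le_of_connected_cover
  · rw [himage]
    exact hS.image_toAddPendant hx
  · rw [himage]
    exact connected_induce_image _ hconn

end UpperBound

section LocallyConnected

variable {G : SimpleGraph V}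

/-- `G` is locally connected: the neighbourhood of every vertex induces a connected (possibly empty)
subgraph. -/
def IsLocallyConnected (G : SimpleGraph V) : Prop :=
  ∀ v : V, (G.induce (G.neighborSet v)).Preconnected

lemma IsCover.neighborSet_subset {S : Set V} (hS : IsCover G S) {v : V} (hv : v ∉ S) :
    G.neighborSet v ⊆ S :=
  fun _ hu => (hS hu).resolve_left hv

theorem IsLocallyConnected.preconnected_induce (hloc : IsLocallyConnected G)
    (hG : G.Preconnected) {S : Set V} (hS : IsCover G S) : (G.induce S).Preconnected := by
  rintro ⟨a, ha⟩ ⟨b, hb⟩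
  -- Allowing the start `u` to be next to `v` lets the induction pass through vertices outside `S`.
  have key : ∀ v, G.Walk v b → ∀ u (hu : u ∈ S), u = v ∨ G.Adj v u →
      (G.induce S).Reachable ⟨u, hu⟩ ⟨b, hb⟩ := by
    intro v p
    induction p with
    | nil =>
      rintro u hu (rfl | hvu)
      · rfl
      · exact Adj.reachable (G := G.induce S) hvu.symm
    | @cons v c b hvc _ ih =>
      intro u hu huv
      by_cases hv : v ∈ S
      · have hvb := ih hb v hv (Or.inr hvc.symm)
        rcases huv with rfl | hvu
        · exact hvb
        · exact (Adj.reachable (G := G.induce S) (u := ⟨u, hu⟩) (v := ⟨v, hv⟩) hvu.symm).trans hvb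
      · have hN := hS.neighborSet_subset hv
        have hvu : G.Adj v u := huv.resolve_left fun h => hv (h ▸ hu)
        have huc : (G.induce S).Reachable ⟨u, hu⟩ ⟨c, hN hvc⟩ :=
          (hloc v ⟨u, hvu⟩ ⟨c, hvc⟩).map (induceHomOfLE G hN).toHom
        exact huc.trans (ih hb c (hN hvc) (Or.inl rfl))
  obtain ⟨p⟩ := hG a b
  exact key a p a ha (Or.inl rfl)

end LocallyConnected

section Chordal

variable {G : SimpleGraph V} {i u w : V}

lemma isInducedPath_of_length_eq_dist {p : G.Walk u w} (hp : p.length = G.dist u w) :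
    IsInducedPath G p := by
  have hdist : ∀ j ≤ p.length, G.dist u (p.getVert j) = j := fun j hj => by
    rw [← length_eq_dist_of_subwalk hp (p.isSubwalk_take j), p.take_length, min_eq_left hj]
  refine ⟨p.isPath_of_length_eq_dist hp, fun y z hy hz hyz => ?_⟩
  obtain ⟨j, rfl, hj⟩ := Walk.mem_support_iff_exists_getVert.1 hy
  obtain ⟨k, rfl, hk⟩ := Walk.mem_support_iff_exists_getVert.1 hz
  have hjk : j ≠ k := fun h => hyz.ne (congrArg p.getVert h)
  have hdiff := hyz.diff_dist_adj (u := u)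
  rw [hdist j hj, hdist k hk] at hdiff
  rw [Walk.mk_mem_edges_iff_exists]
  obtain rfl | rfl : k = j + 1 ∨ j = k + 1 := by omega
  exacts [⟨j, hk, rfl⟩, ⟨k, hj, Sym2.eq_swap⟩]

lemma IsInducedPath.map {V' : Type} {G' : SimpleGraph V'} {p : G.Walk u w}
    (hp : IsInducedPath G p) (f : G ↪g G') : IsInducedPath G' (p.map f.toHom) := by
  refine ⟨hp.1.map f.injective, fun y z hy hz hyz => ?_⟩
  rw [Walk.support_map] at hy hz
  obtain ⟨y', hy', rfl⟩ := List.mem_map.1 hy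
  obtain ⟨z', hz', rfl⟩ := List.mem_map.1 hz
  rw [Walk.edges_map]
  exact List.mem_map_of_mem (hp.2 y' z' hy' hz' (f.map_adj_iff.1 hyz))

lemma isCycle_append_cons_cons {p : G.Walk u w} (hp : p.IsPath) (hi : i ∉ p.support)
    (hu : G.Adj i u) (hw : G.Adj i w) (hlen : 2 ≤ p.length) :
    (p.append (.cons hw.symm (.cons hu .nil))).IsCycle := by
  have hwu : w ≠ u := by
    rintro rfl
    have := (Walk.isPath_iff_nil.1 hp).length_eq_zero
    omega
  have hut : u ∉ p.support.tail :=
    (List.nodup_cons.1 (p.cons_tail_support ▸ hp.support_nodup)).1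
  refine hp.isCycle_append (by simp [hw.ne', hu.ne, hwu]) ?_ (Or.inl hlen)
  simpa [hut] using fun h => hi (List.mem_of_mem_tail h)

lemma IsInducedPath.exists_adj_of_isChordal {p : G.Walk u w} (hp : IsInducedPath G p)
    (hG : IsChordal G) (hi : i ∉ p.support) (hu : G.Adj i u) (hw : G.Adj i w)
    (hlen : 2 ≤ p.length) : ∃ z ∈ p.support, z ≠ u ∧ z ≠ w ∧ G.Adj i z := by
  let c : G.Walk u u := p.append (.cons hw.symm (.cons hu .nil))
  have hc_support : ∀ v ∈ c.support, v = i ∨ v ∈ p.support := fun v hv => by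
    simp only [c, Walk.mem_support_append_iff, Walk.support_cons, Walk.support_nil,
      List.mem_cons, List.not_mem_nil, or_false] at hv
    rcases hv with hv | rfl | rfl | rfl
    exacts [Or.inr hv, Or.inr p.end_mem_support, Or.inl rfl, Or.inr p.start_mem_support]
  have hchord : ∀ z, G.Adj i z → s(i, z) ∉ c.edges → z ∈ c.support →
      ∃ z ∈ p.support, z ≠ u ∧ z ≠ w ∧ G.Adj i z := fun z hiz hne hz =>
    ⟨z, (hc_support z hz).resolve_left hiz.ne', fun h => hne (by simp [c, h]),
      fun h => hne (by simp [c, h]), hiz⟩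
  obtain ⟨y, z, hy, hz, hyz, hne⟩ :=
    hG u c (isCycle_append_cons_cons hp.1 hi hu hw hlen) (by simpa [c] using hlen)
  rcases hc_support y hy with rfl | hyp
  · exact hchord z hyz hne hz
  rcases hc_support z hz with rfl | hzp
  · exact hchord y hyz.symm (Sym2.eq_swap ▸ hne) hy
  · exact absurd (by simp [c, hp.2 y z hyp hzp hyz]) hne

lemma reachable_induce_neighborSet_of_isChordal (hG : IsChordal G) (hu : G.Adj i u)
    (hw : G.Adj i w) (h : (delVert G i).Reachable ⟨u, hu.ne'⟩ ⟨w, hw.ne'⟩) :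
    (G.induce (G.neighborSet i)).Reachable ⟨u, hu⟩ ⟨w, hw⟩ := by
  induction hn : (delVert G i).dist ⟨u, hu.ne'⟩ ⟨w, hw.ne'⟩ using Nat.strong_induction_on
    generalizing u w with
  | _ n ih =>
  classical
  obtain ⟨p, hp⟩ := h.exists_walk_length_eq_dist
  obtain hlen | hlen : p.length ≤ 1 ∨ 2 ≤ p.length := by omega
  · obtain hlen | hlen := Nat.le_one_iff_eq_zero_or_eq_one.1 hlen
    · obtain rfl : u = w := congrArg Subtype.val (Walk.eq_of_length_eq_zero hlen)
      rfl
    · have huw := Walk.adj_of_length_eq_one hlen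
      exact Adj.reachable (G := G.induce (G.neighborSet i)) huw
  · let f : delVert G i ↪g G := Embedding.induce _
    have hip : i ∉ (p.map f.toHom).support := fun hi => by
      obtain ⟨v, -, hv⟩ := List.mem_map.1 (Walk.support_map .. ▸ hi)
      exact v.2 hv
    obtain ⟨z, hz, hzu, hzw, hiz⟩ :=
      ((isInducedPath_of_length_eq_dist hp).map f).exists_adj_of_isChordal hG hip hu hw
        (by simpa using hlen)
    obtain ⟨z, hzp, rfl⟩ := List.mem_map.1 (Walk.support_map .. ▸ hz)
    let q := p.takeUntil z hzp
    let r := p.dropUntil z hzp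
    have hq : (delVert G i).dist ⟨u, hu.ne'⟩ z < n := hn ▸ hp ▸
      (dist_le q).trans_lt (p.length_takeUntil_lt_length hzp fun h => hzw (congrArg _ h))
    have hr : (delVert G i).dist z ⟨w, hw.ne'⟩ < n := hn ▸ hp ▸
      (dist_le r).trans_lt (p.length_dropUntil_lt_length hzp fun h => hzu (congrArg _ h))
    exact (ih _ hq hu hiz q.reachable rfl).trans (ih _ hr hiz hw r.reachable rfl)

theorem IsChordal.isLocallyConnected (hG : IsChordal G) (hcut : ∀ x, ¬ IsCutVertex G x) :
    IsLocallyConnected G := by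
  rintro i ⟨u, hu⟩ ⟨w, hw⟩
  refine reachable_induce_neighborSet_of_isChordal hG hu hw (not_not.1 fun h => ?_)
  exact hcut i ⟨u, w, hu.ne', hw.ne', hu.symm.reachable.trans hw.reachable, h⟩

end Chordal

theorem biconnected_chordal_substructure_general (G : SimpleGraph V)
    (hG : ∀ S : Set V, IsCover G S → (G.induce S).Preconnected) : SubstructureProperty G := by
  intro x _ V' _ G' x' hG' _ H φ hφ C' hC'
  have : Finite V := Finite.of_equiv _ φ.toEquiv.symm
  obtain ⟨T, hT, hxT, hcard⟩ := exists_isCover_card_eq_mvcOn G {x}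
  lift T to Finset V using T.toFinite
  rw [Nat.card_coe_set_eq, Set.ncard_coe_finset] at hcard
  have hxT : x ∈ T := Set.singleton_subset_iff.1 hxT
  have hconn : (G.induce (T : Set V)).Connected := (connected_iff _).2 ⟨hG T hT, ⟨x, hxT⟩⟩
  have hevcOn : evcOn G {x} ≤ mvcOn G {x} + 1 :=
    hcard ▸ evcOn_le_of_connected_cover hT hconn (by simpa using hxT)
  have hevc : evc (addPendant G x) ≤ mvcOn G {x} + 1 :=
    hcard ▸ evc_addPendant_le_of_connected_cover hT hconn hxT
  have hguards : mvcOn G {x} ≤ guardsOn C' (xCompSet G' x' H) := by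
    have hφx : φ x = ⟨x', x_mem_xCompSet G' x' H⟩ := Subtype.ext hφ
    calc mvcOn G {x} ≤ mvcOn (G'.induce (xCompSet G' x' H)) (φ '' {x}) :=
          mvcOn_le_mvcOn_image_iso φ {x}
      _ ≤ guardsOn C' (xCompSet G' x' H) := by
          rw [Set.image_singleton, hφx]
          exact mvcOn_le_guardsOn_xCompSet hG'.preconnected H hC'
  constructor <;> intro <;> omega

/-- Every biconnected chordal graph satisfies the substructure property. -/
theorem biconnected_chordal_substructure (V : Type) [Finite V] (G : SimpleGraph V)
    (hbi : IsBiconnected G) (hch : IsChordal G) : SubstructureProperty G :=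
  biconnected_chordal_substructure_general G fun _ hS =>
    (hch.isLocallyConnected hbi.2.2).preconnected_induce hbi.1.preconnected hS

end EVC
end
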